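/- Let $k$ be a field of characteristic zero and let $V$ be a cosimplicial complex of $k$-vector spaces, i.e. a functor $[n]\mapsto V^n$ from the simplex category $\Delta$ to $\mathbb{Z}$-graded cochain complexes of $k$-vector spaces; write $V^{n,i}$ for the degree-$i$ component of $V^n$ and $V^{\bullet,i}$ for the cosimplicial vector space $[n]\mapsto V^{n,i}$. For a cosimplicial vector space $W$, let $H^j(W)$ denote the cohomology of the cochain complex $W^0\to W^1\to\cdots$ with differential $\partial^n=\sum_{r=0}^{n+1}(-1)^r\partial^n_r$, where $\partial^n_r\colon W^n\to W^{n+1}$ are the coface maps. Let $\ker(V^0\rightrightarrows V^1)\subset V^0$ be the subcomplex on which the two coface maps $V^0\to V^1$ agree. Let $\Omega_n$ be the differential graded commutative $k$-algebra generated by $t_0,\dots,t_n$ in degree $0$ and $dt_0,\dots,dt_n$ in degree $1$ subject to $\sum_i t_i=1$ and $\sum_i dt_i=0$, with differential determined by $t_i\mapsto dt_i$; a morphism $f\colon[p]\to[q]$ of $\Delta$ induces $\Omega(f)\colon\Omega_q\to\Omega_p$, $t_j\mapsto\sum_{f(i)=j}t_i$. Let $\mathrm{Tot}(V)$ be the complex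 whose degree-$m$ part is the space of families $(a_n)_{n\ge 0}\in\prod_n(\Omega_n\otimes_k V^n)^m$, where $(\Omega_n\otimes_k V^n)^m=\bigoplus_{r+i=m}\Omega_n^r\otimes_k V^{n,i}$, such that $(\mathrm{Id}\otimes V(f))(a_p)=(\Omega(f)\otimes\mathrm{Id})(a_q)$ for every $f\colon[p]\to[q]$ in $\Delta$, with differential $d\otimes 1+(-1)^r\,1\otimes d$ on $\Omega_n^r\otimes V^{n,i}$. Suppose that 1. there exists $M\in\mathbb{Z}$ such that $V^{n,i}=0$ for all $i<M$ and all $n\ge 0$; 2. $H^j(V^{\bullet,i})=0$ for all $i\in\mathbb{Z}$ and all $j\neq 0$. Then the canonical map of complexes $\ker(V^0\rightrightarrows V^1)\to\mathrm{Tot}(V)$, which sends $a$ to the family $(1\otimes a_n)_n$, where $a_n\in V^n$ is the image of $a$ under $V(g)$ for any morphism $g\colon[0]\to[n]$ (the image does not depend on $g$), is a quasiisomorphism. -/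

import Mathlib

open CategoryTheory TensorProduct

universe u w

noncomputable section

namespace PolyDeRham

variable (k : Type u) [Field k]

/-- The ideal of `k[t₀,…,tₙ]` generated by `t₀ + ⋯ + tₙ - 1`. -/
def relIdeal (n : ℕ) : Ideal (MvPolynomial (Fin (n + 1)) k) :=
  Ideal.span {∑ i, MvPolynomial.X i - 1}

/-- Polynomial functions on the `n`-simplex: `k[t₀,…,tₙ] / (t₀ + ⋯ + tₙ - 1)`. -/
def Fun (n : ℕ) : Type u := MvPolynomial (Fin (n + 1)) k ⧸ relIdeal k n

instance (n : ℕ) : CommRing (Fun k n) :=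
  inferInstanceAs (CommRing (MvPolynomial (Fin (n + 1)) k ⧸ relIdeal k n))

instance (n : ℕ) : Algebra k (Fun k n) :=
  inferInstanceAs (Algebra k (MvPolynomial (Fin (n + 1)) k ⧸ relIdeal k n))

/-- The vector space generated by `dt₀,…,dtₙ` subject to `dt₀ + ⋯ + dtₙ = 0`; the class of the
`i`-th basis vector is `dtᵢ`. -/
def Cov (n : ℕ) : Type u :=
  (Fin (n + 1) → k) ⧸ Submodule.span k {(fun _ => 1 : Fin (n + 1) → k)}

instance (n : ℕ) : AddCommGroup (Cov k n) :=
  inferInstanceAs (AddCommGroup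
    ((Fin (n + 1) → k) ⧸ Submodule.span k {(fun _ => 1 : Fin (n + 1) → k)}))

instance (n : ℕ) : Module k (Cov k n) :=
  inferInstanceAs (Module k
    ((Fin (n + 1) → k) ⧸ Submodule.span k {(fun _ => 1 : Fin (n + 1) → k)}))

variable {k}

/-- The class of a polynomial in `t₀,…,tₙ`. -/
def poly {n : ℕ} : MvPolynomial (Fin (n + 1)) k →ₐ[k] Fun k n :=
  Ideal.Quotient.mkₐ k (relIdeal k n)

/-- The class of `∑ᵢ cᵢ dtᵢ` for a coefficient vector `c`. -/
def cov {n : ℕ} : (Fin (n + 1) → k) →ₗ[k] Cov k n :=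
  Submodule.mkQ (Submodule.span k {(fun _ => 1 : Fin (n + 1) → k)})

/-- The generator `dtᵢ`. -/
def dt {n : ℕ} (i : Fin (n + 1)) : Cov k n := cov (Pi.single i 1)

variable (k)

/-- The degree-`p` part of `Ωₙ`. The graded commutative algebra generated by `t₀,…,tₙ` in degree `0`
and `dt₀,…,dtₙ` in degree `1` subject to `∑ tᵢ = 1` and `∑ dtᵢ = 0` is the tensor product of the
commutative algebra `Fun k n` on the `tᵢ` and the exterior algebra of `Cov k n` on the `dtᵢ`. -/
def Form (n p : ℕ) : Type u := Fun k n ⊗[k] ⋀[k]^p (Cov k n)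

instance (n p : ℕ) : AddCommGroup (Form k n p) :=
  inferInstanceAs (AddCommGroup (Fun k n ⊗[k] ⋀[k]^p (Cov k n)))

instance (n p : ℕ) : Module k (Form k n p) :=
  inferInstanceAs (Module k (Fun k n ⊗[k] ⋀[k]^p (Cov k n)))

variable {k}

/-- The identification of `Form k n p` with its definition. -/
def Form.toTensor {n p : ℕ} : Form k n p ≃ₗ[k] Fun k n ⊗[k] ⋀[k]^p (Cov k n) :=
  LinearEquiv.refl k _

/-- The form `f ω = f ⊗ ω`, for a function `f` and a constant-coefficient form `ω`. -/
def Form.mk {n p : ℕ} : Fun k n →ₗ[k] ⋀[k]^p (Cov k n) →ₗ[k] Form k n p :=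
  (TensorProduct.mk k (Fun k n) (⋀[k]^p (Cov k n))).compr₂ Form.toTensor.symm.toLinearMap

lemma sum_dt (n : ℕ) : ∑ i, (dt i : Cov k n) = 0 := by
  simp only [dt]
  rw [← map_sum, Finset.univ_sum_single (fun _ : Fin (n + 1) => (1 : k))]
  exact (Submodule.Quotient.mk_eq_zero _).mpr (Submodule.mem_span_singleton_self _)

/-- Left multiplication `ω ↦ v ∧ ω` on exterior powers. -/
def wedge {M : Type u} [AddCommGroup M] [Module k M] (p : ℕ) (v : M) :
    ⋀[k]^p M →ₗ[k] ⋀[k]^(p + 1) M :=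
  (LinearMap.mulLeft k (ExteriorAlgebra.ι k v)).restrict (fun x hx => by
    rw [LinearMap.mulLeft_apply]
    change _ ∈ LinearMap.range (ExteriorAlgebra.ι k) ^ (p + 1)
    rw [pow_succ']
    exact Submodule.mul_mem_mul ⟨v, rfl⟩ hx)

lemma wedge_coe {M : Type u} [AddCommGroup M] [Module k M] (p : ℕ) (v : M) (x : ⋀[k]^p M) :
    (wedge p v x : ExteriorAlgebra k M) = ExteriorAlgebra.ι k v * x := rfl

/-- `wedge` as a bilinear map. -/
def wedgeₗ (M : Type u) [AddCommGroup M] [Module k M] (p : ℕ) :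
    M →ₗ[k] ⋀[k]^p M →ₗ[k] ⋀[k]^(p + 1) M where
  toFun := wedge p
  map_add' v w := by ext x; simp [wedge_coe, add_mul]
  map_smul' c v := by ext x; simp [wedge_coe]

lemma wedge_wedge_add {M : Type u} [AddCommGroup M] [Module k M] (p : ℕ) (v w : M)
    (x : ⋀[k]^p M) : wedge (p + 1) v (wedge p w x) + wedge (p + 1) w (wedge p v x) = 0 := by
  apply Subtype.ext
  simp only [Submodule.coe_add, wedge_coe, ← mul_assoc, ← add_mul,
    ExteriorAlgebra.ι_add_mul_swap, zero_mul, Submodule.coe_zero]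

lemma wedge_wedge_self {M : Type u} [AddCommGroup M] [Module k M] (p : ℕ) (v : M)
    (x : ⋀[k]^p M) : wedge (p + 1) v (wedge p v x) = 0 := by
  apply Subtype.ext
  rw [wedge_coe, wedge_coe, ← mul_assoc, ExteriorAlgebra.ι_sq_zero, zero_mul]
  rfl

lemma map_coe {M N : Type u} [AddCommGroup M] [Module k M] [AddCommGroup N] [Module k N]
    (p : ℕ) (g : M →ₗ[k] N) (x : ⋀[k]^p M) :
    (exteriorPower.map p g x : ExteriorAlgebra k N) = ExteriorAlgebra.map g x := by
  have : (Submodule.subtype _) ∘ₗ exteriorPower.map p g =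
      (ExteriorAlgebra.map g).toLinearMap ∘ₗ Submodule.subtype (⋀[k]^p M) := by
    apply exteriorPower.linearMap_ext
    ext v
    simp [exteriorPower.map_apply_ιMulti, ExteriorAlgebra.map_apply_ιMulti]
  exact LinearMap.congr_fun this x

lemma map_wedge {M N : Type u} [AddCommGroup M] [Module k M] [AddCommGroup N] [Module k N]
    (p : ℕ) (g : M →ₗ[k] N) (v : M) (x : ⋀[k]^p M) :
    exteriorPower.map (p + 1) g (wedge p v x) = wedge p (g v) (exteriorPower.map p g x) := by
  apply Subtype.ext
  simp [wedge_coe, map_coe]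

/-- The total differential of polynomial functions, `f ↦ ∑ᵢ (∂f/∂tᵢ) dtᵢ`, before passing to the
quotient by `t₀ + ⋯ + tₙ = 1`. -/
def gradPoly (n : ℕ) : MvPolynomial (Fin (n + 1)) k →ₗ[k] Fun k n ⊗[k] Cov k n :=
  ∑ i, (TensorProduct.mk k (Fun k n) (Cov k n)).flip (dt i) ∘ₗ
    (poly (k := k) (n := n)).toLinearMap ∘ₗ (MvPolynomial.pderiv i).toLinearMap

lemma gradPoly_apply {n : ℕ} (f : MvPolynomial (Fin (n + 1)) k) :
    gradPoly n f = ∑ i, poly (MvPolynomial.pderiv i f) ⊗ₜ[k] (dt i : Cov k n) := by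
  simp [gradPoly, LinearMap.sum_apply]

lemma gradPoly_mem {n : ℕ} (f : MvPolynomial (Fin (n + 1)) k) (hf : f ∈ relIdeal k n) :
    gradPoly n f = 0 := by
  obtain ⟨g, rfl⟩ := Ideal.mem_span_singleton'.mp hf
  have h0 : poly (∑ i, MvPolynomial.X i - 1 : MvPolynomial (Fin (n + 1)) k) = 0 :=
    Ideal.Quotient.eq_zero_iff_mem.mpr (Ideal.subset_span rfl)
  have h1 (i : Fin (n + 1)) : MvPolynomial.pderiv i
      (∑ j, MvPolynomial.X j - 1 : MvPolynomial (Fin (n + 1)) k) = 1 := by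
    simp [map_sum, MvPolynomial.pderiv_X, Pi.single_apply]
  rw [gradPoly_apply]
  have h2 (i : Fin (n + 1)) : poly (MvPolynomial.pderiv i
      (g * (∑ j, MvPolynomial.X j - 1 : MvPolynomial (Fin (n + 1)) k))) = poly g := by
    rw [Derivation.leibniz, h1, map_add, smul_eq_mul, smul_eq_mul, map_mul, map_mul, h0]
    simp
  simp only [h2]
  rw [← TensorProduct.tmul_sum, sum_dt, TensorProduct.tmul_zero]

/-- The total differential of polynomial functions on the simplex, `f ↦ ∑ᵢ (∂f/∂tᵢ) dtᵢ`. -/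
def grad (n : ℕ) : Fun k n →ₗ[k] Fun k n ⊗[k] Cov k n :=
  Submodule.liftQ ((relIdeal k n).restrictScalars k) (gradPoly n) gradPoly_mem

lemma grad_poly {n : ℕ} (f : MvPolynomial (Fin (n + 1)) k) :
    grad n (poly f) = ∑ i, poly (MvPolynomial.pderiv i f) ⊗ₜ[k] (dt i : Cov k n) :=
  gradPoly_apply f

variable (k) in
/-- The de Rham differential `f ω ↦ ∑ᵢ (∂f/∂tᵢ) dtᵢ ∧ ω`. It sends `tᵢ` to `dtᵢ`, it kills every
`dtᵢ`, and it satisfies the Leibniz rule. -/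
def deRham (n p : ℕ) : Form k n p →ₗ[k] Form k n (p + 1) :=
  Form.toTensor.symm.toLinearMap ∘ₗ
    (TensorProduct.lift (wedgeₗ (Cov k n) p)).lTensor (Fun k n) ∘ₗ
      (TensorProduct.assoc k (Fun k n) (Cov k n) (⋀[k]^p (Cov k n))).toLinearMap ∘ₗ
        (grad n).rTensor (⋀[k]^p (Cov k n)) ∘ₗ Form.toTensor.toLinearMap

lemma deRham_mk {n p : ℕ} (f : MvPolynomial (Fin (n + 1)) k) (x : ⋀[k]^p (Cov k n)) :
    deRham k n p (Form.mk (poly f) x) =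
      ∑ i, Form.mk (poly (MvPolynomial.pderiv i f)) (wedge p (dt i) x) := by
  simp only [deRham, Form.mk, LinearMap.compr₂_apply, TensorProduct.mk_apply, LinearMap.comp_apply,
    LinearEquiv.coe_coe, LinearEquiv.apply_symm_apply, LinearMap.rTensor_tmul, grad_poly,
    TensorProduct.sum_tmul, map_sum, TensorProduct.assoc_tmul,
    LinearMap.lTensor_tmul, TensorProduct.lift.tmul]
  rfl

lemma form_ext {n p : ℕ} {P : Type*} [AddCommGroup P] [Module k P] {g h : Form k n p →ₗ[k] P}
    (H : ∀ f x, g (Form.mk (poly f) x) = h (Form.mk (poly f) x)) : g = h := by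
  have : g ∘ₗ Form.toTensor.symm.toLinearMap = h ∘ₗ Form.toTensor.symm.toLinearMap := by
    apply TensorProduct.ext'
    intro f x
    obtain ⟨f, rfl⟩ := Ideal.Quotient.mkₐ_surjective k (relIdeal k n) f
    exact H f x
  exact LinearMap.ext fun x => LinearMap.congr_fun this x

lemma pderiv_comm {n : ℕ} (i j : Fin (n + 1)) (f : MvPolynomial (Fin (n + 1)) k) :
    MvPolynomial.pderiv i (MvPolynomial.pderiv j f) =
      MvPolynomial.pderiv j (MvPolynomial.pderiv i f) := by
  have h : ⁅(MvPolynomial.pderiv i : Derivation k (MvPolynomial (Fin (n + 1)) k) _),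
      (MvPolynomial.pderiv j : Derivation k (MvPolynomial (Fin (n + 1)) k) _)⁆ = 0 := by
    apply MvPolynomial.derivation_ext
    intro l
    simp [Derivation.commutator_apply, MvPolynomial.pderiv_X, Pi.single_apply, apply_ite]
  have := DFunLike.congr_fun h f
  rwa [Derivation.commutator_apply, Derivation.zero_apply, sub_eq_zero] at this

lemma deRham_comp_deRham (n p : ℕ) : deRham k n (p + 1) ∘ₗ deRham k n p = 0 := by
  apply form_ext
  intro f x
  rw [LinearMap.comp_apply, deRham_mk, map_sum]
  simp only [deRham_mk, LinearMap.zero_apply]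
  rw [← Finset.sum_product']
  refine Finset.sum_involution (fun a _ => (a.2, a.1)) ?_ ?_ (by simp) (by simp)
  · rintro ⟨i, j⟩ -
    rw [pderiv_comm i j, ← map_add, wedge_wedge_add, map_zero]
  · rintro ⟨i, j⟩ - h hij
    obtain rfl : j = i := congrArg Prod.fst hij
    exact h (by rw [wedge_wedge_self, map_zero])

/-- The pullback of polynomial functions along `f : [p] → [q]`, `t_j ↦ ∑_{f(i) = j} t_i`. -/
def pullPoly {p q : ℕ} (f : Fin (p + 1) → Fin (q + 1)) :
    MvPolynomial (Fin (q + 1)) k →ₐ[k] MvPolynomial (Fin (p + 1)) k :=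
  MvPolynomial.aeval fun j => ∑ i with f i = j, MvPolynomial.X i

lemma pullPoly_mem {p q : ℕ} (f : Fin (p + 1) → Fin (q + 1)) :
    relIdeal k q ≤ (relIdeal k p).comap (pullPoly f) := by
  rw [relIdeal, Ideal.span_le, Set.singleton_subset_iff]
  have : pullPoly f (∑ j, MvPolynomial.X j - 1 : MvPolynomial (Fin (q + 1)) k) =
      ∑ i, MvPolynomial.X i - 1 := by
    simp only [pullPoly, map_sub, map_sum, MvPolynomial.aeval_X, map_one]
    rw [Finset.sum_fiberwise]
  change pullPoly f _ ∈ relIdeal k p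
  rw [this]
  exact Ideal.subset_span rfl

/-- The pullback `Ω_q⁰ → Ω_p⁰`, `t_j ↦ ∑_{f(i) = j} t_i`. -/
def pullFun {p q : ℕ} (f : Fin (p + 1) → Fin (q + 1)) : Fun k q →ₐ[k] Fun k p :=
  Ideal.quotientMapₐ (relIdeal k p) (pullPoly f) (pullPoly_mem f)

/-- The pullback of covectors `dt_j ↦ ∑_{f(i) = j} dt_i`. In terms of coefficient vectors it is
precomposition with `f`. -/
def pullCov {p q : ℕ} (f : Fin (p + 1) → Fin (q + 1)) : Cov k q →ₗ[k] Cov k p :=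
  Submodule.mapQ _ _ (LinearMap.funLeft k k f) (by
    rw [Submodule.span_le, Set.singleton_subset_iff]
    exact Submodule.subset_span rfl)

lemma pullCov_dt {p q : ℕ} (f : Fin (p + 1) → Fin (q + 1)) (j : Fin (q + 1)) :
    (pullCov f : Cov k q →ₗ[k] Cov k p) (dt j) = ∑ i with f i = j, dt i := by
  simp only [dt]
  rw [← map_sum]
  change cov (LinearMap.funLeft k k f _) = _
  congr 1
  ext l
  simp [LinearMap.funLeft_apply, Finset.sum_apply, Pi.single_apply, Finset.sum_ite_eq]

/-- The structure map `Ω(f) : Ω_q → Ω_p` in form degree `r`. -/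
def pull {p q : ℕ} (r : ℕ) (f : Fin (p + 1) → Fin (q + 1)) : Form k q r →ₗ[k] Form k p r :=
  Form.toTensor.symm.toLinearMap ∘ₗ
    TensorProduct.map (pullFun f).toLinearMap (exteriorPower.map r (pullCov f)) ∘ₗ
      Form.toTensor.toLinearMap

lemma pull_mk {p q : ℕ} (r : ℕ) (f : Fin (p + 1) → Fin (q + 1))
    (g : Fun k q) (x : ⋀[k]^r (Cov k q)) :
    pull r f (Form.mk g x) = Form.mk (pullFun f g) (exteriorPower.map r (pullCov f) x) := rfl

lemma pullFun_poly {p q : ℕ} (f : Fin (p + 1) → Fin (q + 1))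
    (g : MvPolynomial (Fin (q + 1)) k) : pullFun f (poly g) = poly (pullPoly f g) := rfl

lemma pderiv_pullPoly {p q : ℕ} (f : Fin (p + 1) → Fin (q + 1)) (i : Fin (p + 1))
    (g : MvPolynomial (Fin (q + 1)) k) :
    MvPolynomial.pderiv i (pullPoly f g) = pullPoly f (MvPolynomial.pderiv (f i) g) := by
  induction g using MvPolynomial.induction_on with
  | C a => simp [pullPoly, MvPolynomial.algebraMap_eq]
  | add a b ha hb => simp [ha, hb]
  | mul_X a j ha =>
    have hX : MvPolynomial.pderiv i (pullPoly f (MvPolynomial.X j : MvPolynomial _ k)) =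
        pullPoly f (MvPolynomial.pderiv (f i) (MvPolynomial.X j)) := by
      simp only [pullPoly, MvPolynomial.aeval_X, map_sum, MvPolynomial.pderiv_X,
        Pi.single_apply, apply_ite, map_one, map_zero]
      simp [Finset.sum_ite_eq, eq_comm]
    rw [map_mul, MvPolynomial.pderiv_mul, MvPolynomial.pderiv_mul, ha, hX, map_add, map_mul,
      map_mul]

lemma pull_deRham {p q : ℕ} (r : ℕ) (f : Fin (p + 1) → Fin (q + 1)) :
    pull (r + 1) f ∘ₗ deRham k q r = deRham k p r ∘ₗ pull r f := by
  apply form_ext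
  intro g x
  rw [LinearMap.comp_apply, LinearMap.comp_apply, deRham_mk, map_sum, pull_mk, pullFun_poly,
    deRham_mk]
  simp only [pull_mk, pullFun_poly, map_wedge, pullCov_dt, pderiv_pullPoly]
  have h (j : Fin (q + 1)) (y : ⋀[k]^r (Cov k p)) :
      wedge r (∑ i with f i = j, (dt i : Cov k p)) y = ∑ i with f i = j, wedge r (dt i) y := by
    change wedgeₗ _ r _ y = _
    rw [map_sum, LinearMap.sum_apply]
    rfl
  simp only [h, map_sum]
  rw [← Finset.sum_fiberwise (g := f)]
  refine Finset.sum_congr rfl fun j _ => Finset.sum_congr rfl fun i hi => ?_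
  rw [(Finset.mem_filter.mp hi).2]

variable (k) in
/-- The unit `1 ∈ Ωₙ⁰`; the empty wedge product is the unit of the exterior algebra. -/
def unit (n : ℕ) : Form k n 0 := Form.mk 1 (exteriorPower.ιMulti k 0 Fin.elim0)

lemma pull_unit {p q : ℕ} (f : Fin (p + 1) → Fin (q + 1)) : pull 0 f (unit k q) = unit k p := by
  rw [unit, pull_mk, map_one, exteriorPower.map_apply_ιMulti, unit,
    Subsingleton.elim (_ ∘ _) (Fin.elim0 : Fin 0 → Cov k p)]

lemma deRham_unit (n : ℕ) : deRham k n 0 (unit k n) = 0 := by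
  have h : (1 : Fun k n) = poly 1 := (map_one _).symm
  rw [unit, h, deRham_mk]
  simp

/-- There are no forms of degree larger than the dimension of the simplex. -/
lemma form_subsingleton {n p : ℕ} (h : n < p) : Subsingleton (Form k n p) := by
  have hW : Module.finrank k (Cov k n) = n := by
    have h1 := Submodule.finrank_quotient_add_finrank
      (Submodule.span k {(fun _ => 1 : Fin (n + 1) → k)})
    rw [finrank_span_singleton (fun h => one_ne_zero (congrFun h 0)), Module.finrank_fin_fun] at h1
    exact Nat.add_right_cancel h1
  have hF : Module.Finite k (Cov k n) :=
    inferInstanceAs (Module.Finite k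
      ((Fin (n + 1) → k) ⧸ Submodule.span k {(fun _ => 1 : Fin (n + 1) → k)}))
  have h2 : Subsingleton (⋀[k]^p (Cov k n)) := by
    apply Module.finrank_zero_iff (R := k).mp
    rw [exteriorPower.finrank_eq, hW, Nat.choose_eq_zero_of_lt h]
  exact inferInstanceAs (Subsingleton (Fun k n ⊗[k] ⋀[k]^p (Cov k n)))

end PolyDeRham

namespace CosimplicialTot

open PolyDeRham

variable {k : Type u} [Field k]
  (V : CosimplicialObject (CochainComplex (ModuleCat.{max u w} k) ℤ))

/-- The component `V^{n,i}`. -/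
abbrev comp (n : ℕ) (i : ℤ) : ModuleCat.{max u w} k := (V.obj (SimplexCategory.mk n)).X i

/-- The differential `V^{n,i} → V^{n,j}` of the complex `Vⁿ`. -/
abbrev dV (n : ℕ) (i j : ℤ) : comp V n i →ₗ[k] comp V n j :=
  ((V.obj (SimplexCategory.mk n)).d i j).hom

/-- The map `V(f) : V^{p,i} → V^{q,i}`. -/
abbrev mapV {p q : ℕ} (f : SimplexCategory.mk p ⟶ SimplexCategory.mk q) (i : ℤ) :
    comp V p i →ₗ[k] comp V q i :=
  ((V.map f).f i).hom

/-- The underlying map of sets of a morphism `[p] → [q]` in `Δ`. -/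
abbrev fn {p q : ℕ} (f : SimplexCategory.mk p ⟶ SimplexCategory.mk q) :
    Fin (p + 1) → Fin (q + 1) := f.toOrderHom

/-- The equalizer of the two coface maps `V^{0,i} → V^{1,i}`. -/
def kerSub (i : ℤ) : Submodule k (comp V 0 i) :=
  LinearMap.eqLocus ((V.δ (0 : Fin 2)).f i).hom ((V.δ (1 : Fin 2)).f i).hom

lemma dV_mapV {p q : ℕ} (f : SimplexCategory.mk p ⟶ SimplexCategory.mk q) (i j : ℤ)
    (x : comp V p i) : dV V q i j (mapV V f i x) = mapV V f j (dV V p i j x) :=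
  LinearMap.congr_fun (congrArg ModuleCat.Hom.hom ((V.map f).comm i j)) x

lemma mapV_comp {p q r : ℕ} (f : SimplexCategory.mk p ⟶ SimplexCategory.mk q)
    (g : SimplexCategory.mk q ⟶ SimplexCategory.mk r) (i : ℤ) (x : comp V p i) :
    mapV V (f ≫ g) i x = mapV V g i (mapV V f i x) :=
  LinearMap.congr_fun (congrArg (fun h => ModuleCat.Hom.hom (HomologicalComplex.Hom.f h i))
    (V.map_comp f g)) x

lemma dV_dV (n : ℕ) (i j l : ℤ) (x : comp V n i) : dV V n j l (dV V n i j x) = 0 :=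
  LinearMap.congr_fun (congrArg ModuleCat.Hom.hom
    ((V.obj (SimplexCategory.mk n)).d_comp_d i j l)) x

lemma kerSub_d (i j : ℤ) (x : comp V 0 i) (hx : x ∈ kerSub V i) : dV V 0 i j x ∈ kerSub V j := by
  have h : mapV V (SimplexCategory.δ (0 : Fin 2)) i x =
    mapV V (SimplexCategory.δ (1 : Fin 2)) i x := hx
  change mapV V (SimplexCategory.δ (0 : Fin 2)) j _ = mapV V (SimplexCategory.δ (1 : Fin 2)) j _
  rw [← dV_mapV, ← dV_mapV, h]

/-- The subcomplex `ker(V⁰ ⇉ V¹)` of `V⁰`. -/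
def ker : CochainComplex (ModuleCat.{max u w} k) ℤ where
  X i := ModuleCat.of k (kerSub V i)
  d i j := ModuleCat.ofHom ((dV V 0 i j).restrict (kerSub_d V i j))
  shape i j h := by
    refine ModuleCat.hom_ext (LinearMap.ext fun x => Subtype.ext ?_)
    exact LinearMap.congr_fun
      (congrArg ModuleCat.Hom.hom ((V.obj (SimplexCategory.mk 0)).shape i j h)) x.1
  d_comp_d' i j l _ _ := by
    exact ModuleCat.hom_ext (LinearMap.ext fun x => Subtype.ext (dV_dV V 0 i j l x.1))

/-- Families `a` with components `a n p i ∈ Ωₙᵖ ⊗ V^{n,i}`. -/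
abbrev Family : Type (max u w) :=
  ∀ (n p : ℕ) (i : ℤ), Form k n p ⊗[k] comp V n i

/-- The total differential on `Ωₙ ⊗ Vⁿ` for all `n`: it is `d ⊗ 1 + (-1)ᵖ 1 ⊗ d` on
`Ωₙᵖ ⊗ V^{n,i}`. -/
def totD : Family V →ₗ[k] Family V where
  toFun a n p i := match p with
    | 0 => (dV V n (i - 1) i).lTensor (Form k n 0) (a n 0 (i - 1))
    | p + 1 => (deRham k n p).rTensor (comp V n i) (a n p i) +
        (-1 : k) ^ (p + 1) • (dV V n (i - 1) i).lTensor (Form k n (p + 1)) (a n (p + 1) (i - 1))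
  map_add' a b := by
    funext n p i
    cases p with
    | zero => exact map_add _ _ _
    | succ p => simp only [Pi.add_apply, map_add, smul_add]; abel
  map_smul' c a := by
    funext n p i
    cases p with
    | zero => exact LinearMap.map_smul _ _ _
    | succ p =>
      simp only [Pi.smul_apply, map_smul, smul_add, RingHom.id_apply]
      rw [smul_comm c]

/-- `Tot(V)ᵐ`: the families `a = (aₙ)` with `aₙ ∈ Ωₙ ⊗ Vⁿ` homogeneous of total degree `m`, such
that `(Id ⊗ V(f))(a_p) = (Ω(f) ⊗ Id)(a_q)` for all `f : [p] → [q]` in `Δ`. Because `Ωₙʳ = 0` for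
`r > n`, the element `aₙ` of total degree `m` has only finitely many nonzero components
`a n r i`, `r + i = m`. -/
def totSub (m : ℤ) : Submodule k (Family V) where
  carrier := {a | (∀ (n r : ℕ) (i : ℤ), (r : ℤ) + i ≠ m → a n r i = 0) ∧
    ∀ (p q : ℕ) (f : SimplexCategory.mk p ⟶ SimplexCategory.mk q) (r : ℕ) (i : ℤ),
      (mapV V f i).lTensor (Form k p r) (a p r i) =
        (pull r (fn f)).rTensor (comp V q i) (a q r i)}
  zero_mem' := ⟨fun _ _ _ _ => rfl, fun _ _ _ _ _ => by simp⟩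
  add_mem' {a b} ha hb := ⟨fun n r i h => by simp [ha.1 n r i h, hb.1 n r i h],
    fun p q f r i => by simp [ha.2 p q f r i, hb.2 p q f r i]⟩
  smul_mem' c a ha := ⟨fun n r i h => by simp [ha.1 n r i h],
    fun p q f r i => by simp [ha.2 p q f r i]⟩

lemma totD_zero (a : Family V) (n : ℕ) (i : ℤ) :
    totD V a n 0 i = (dV V n (i - 1) i).lTensor (Form k n 0) (a n 0 (i - 1)) := rfl

lemma totD_succ (a : Family V) (n p : ℕ) (i : ℤ) :
    totD V a n (p + 1) i = (deRham k n p).rTensor (comp V n i) (a n p i) +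
      (-1 : k) ^ (p + 1) •
        (dV V n (i - 1) i).lTensor (Form k n (p + 1)) (a n (p + 1) (i - 1)) := rfl

lemma lTensor_dV_dV (n p : ℕ) (i j l : ℤ) (x : Form k n p ⊗[k] comp V n i) :
    (dV V n j l).lTensor (Form k n p) ((dV V n i j).lTensor (Form k n p) x) = 0 := by
  have h : dV V n j l ∘ₗ dV V n i j = 0 := LinearMap.ext (dV_dV V n i j l)
  rw [← LinearMap.comp_apply, ← LinearMap.lTensor_comp, h, LinearMap.lTensor_zero,
    LinearMap.zero_apply]

lemma rTensor_deRham_deRham (n p : ℕ) (i : ℤ) (x : Form k n p ⊗[k] comp V n i) :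
    (deRham k n (p + 1)).rTensor (comp V n i) ((deRham k n p).rTensor (comp V n i) x) = 0 := by
  rw [← LinearMap.comp_apply, ← LinearMap.rTensor_comp, deRham_comp_deRham,
    LinearMap.rTensor_zero, LinearMap.zero_apply]

lemma lTensor_rTensor {F G : Type u} [AddCommGroup F] [Module k F] [AddCommGroup G] [Module k G]
    {X Y : Type (max u w)} [AddCommGroup X] [Module k X] [AddCommGroup Y] [Module k Y]
    (g : F →ₗ[k] G) (h : X →ₗ[k] Y) (x : F ⊗[k] X) :
    h.lTensor G (g.rTensor X x) = g.rTensor Y (h.lTensor F x) := by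
  rw [← LinearMap.comp_apply, ← LinearMap.comp_apply, LinearMap.lTensor_comp_rTensor,
    LinearMap.rTensor_comp_lTensor]

/-- The total differential squares to zero. -/
lemma totD_totD (a : Family V) : totD V (totD V a) = 0 := by
  funext n p i
  match p with
  | 0 => rw [totD_zero, totD_zero, lTensor_dV_dV]; rfl
  | 1 =>
    rw [totD_succ, totD_succ, totD_zero, map_add, map_smul, lTensor_dV_dV, lTensor_rTensor,
      smul_zero, add_zero]
    simp
  | p + 2 =>
    rw [totD_succ, totD_succ, totD_succ, map_add, map_add, map_smul, map_smul, lTensor_dV_dV,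
      lTensor_rTensor, rTensor_deRham_deRham]
    rw [smul_zero, add_zero, zero_add, ← add_smul, pow_succ _ (p + 1), mul_neg_one, add_neg_cancel,
      zero_smul]
    rfl

lemma totD_mem {m m' : ℤ} (h : m + 1 = m') (a : Family V) (ha : a ∈ totSub V m) :
    totD V a ∈ totSub V m' := by
  refine ⟨fun n r i hr => ?_, fun p q f r i => ?_⟩
  · cases r with
    | zero => rw [totD_zero, ha.1 n 0 (i - 1) (by push_cast at hr ⊢; omega), map_zero]
    | succ r =>
      rw [totD_succ, ha.1 n r i (by push_cast at hr ⊢; omega),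
        ha.1 n (r + 1) (i - 1) (by push_cast at hr ⊢; omega)]
      simp
  · have hV (r : ℕ) (x : Form k p r ⊗[k] comp V p (i - 1)) :
        (mapV V f i).lTensor (Form k p r) ((dV V p (i - 1) i).lTensor (Form k p r) x) =
          (dV V q (i - 1) i).lTensor (Form k p r) ((mapV V f (i - 1)).lTensor (Form k p r) x) := by
      rw [← LinearMap.comp_apply, ← LinearMap.comp_apply, ← LinearMap.lTensor_comp,
        ← LinearMap.lTensor_comp]
      congr 2
      exact LinearMap.ext fun y => (dV_mapV V f (i - 1) i y).symm
    cases r with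
    | zero => rw [totD_zero, totD_zero, hV, ha.2, lTensor_rTensor]
    | succ r =>
      rw [totD_succ, totD_succ, map_add, map_add, map_smul, map_smul, hV, ha.2, lTensor_rTensor,
        lTensor_rTensor, ha.2, ← LinearMap.comp_apply, ← LinearMap.rTensor_comp, ← pull_deRham,
        LinearMap.rTensor_comp, LinearMap.comp_apply]

/-- The complex `Tot(V)`. -/
def Tot : CochainComplex (ModuleCat.{max u w} k) ℤ where
  X m := ModuleCat.of k (totSub V m)
  d m m' := if h : m + 1 = m' then ModuleCat.ofHom ((totD V).restrict (totD_mem V h)) else 0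
  shape m m' h := dif_neg h
  d_comp_d' m m' m'' h h' := by
    rw [dif_pos (show m + 1 = m' from h), dif_pos (show m' + 1 = m'' from h')]
    exact ModuleCat.hom_ext (LinearMap.ext fun x => Subtype.ext (totD_totD V x.1))

/-- The morphism `[0] → [n]` with value `0`. -/
def vertex (n : ℕ) : SimplexCategory.mk 0 ⟶ SimplexCategory.mk n :=
  SimplexCategory.const _ _ 0

/-- The family attached to `a ∈ V^{0,m}`: its `n`-th member is `1 ⊗ V(vertex n)(a) ∈ Ωₙ⁰ ⊗ V^{n,m}`.
For `a` in `ker(V⁰ ⇉ V¹)` the image of `a` in `Vⁿ` does not depend on the chosen vertex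
`[0] → [n]`. -/
def unitFamily (m : ℤ) : comp V 0 m →ₗ[k] Family V where
  toFun x n p i := match p with
    | 0 => Pi.single (M := fun i => Form k n 0 ⊗[k] comp V n i) m
        (unit k n ⊗ₜ mapV V (vertex n) m x) i
    | _ + 1 => 0
  map_add' x y := by
    funext n p i
    cases p with
    | zero => simp only [map_add, TensorProduct.tmul_add, Pi.single_add, Pi.add_apply]
    | succ p => exact (add_zero _).symm
  map_smul' c x := by
    funext n p i
    cases p with
    | zero =>
      simp only [map_smul, TensorProduct.tmul_smul, Pi.single_smul, Pi.smul_apply,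
        RingHom.id_apply]
    | succ p => exact (smul_zero c).symm

lemma unitFamily_self (m : ℤ) (x : comp V 0 m) (n : ℕ) :
    unitFamily V m x n 0 m = unit k n ⊗ₜ mapV V (vertex n) m x :=
  Pi.single_eq_same (M := fun i => Form k n 0 ⊗[k] comp V n i) m _

lemma unitFamily_of_ne {m i : ℤ} (h : i ≠ m) (x : comp V 0 m) (n : ℕ) :
    unitFamily V m x n 0 i = 0 :=
  Pi.single_eq_of_ne (M := fun i => Form k n 0 ⊗[k] comp V n i) h _

lemma unitFamily_succ (m i : ℤ) (x : comp V 0 m) (n p : ℕ) :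
    unitFamily V m x n (p + 1) i = 0 := rfl

/-- The image of `x ∈ ker(V⁰ ⇉ V¹)` in `Vⁿ` does not depend on the chosen vertex `[0] → [n]`. -/
lemma mapV_vertex_eq {m : ℤ} {x : comp V 0 m} (hx : x ∈ kerSub V m) {n : ℕ}
    (f : SimplexCategory.mk 0 ⟶ SimplexCategory.mk n) :
    mapV V f m x = mapV V (vertex n) m x := by
  let g : SimplexCategory.mk 1 ⟶ SimplexCategory.mk n :=
    SimplexCategory.mkOfLe 0 (f.toOrderHom 0) (Fin.zero_le _)
  have h0 : SimplexCategory.δ (0 : Fin 2) ≫ g = f := by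
    ext j
    fin_cases j
    rfl
  have h1 : SimplexCategory.δ (1 : Fin 2) ≫ g = vertex n := by
    ext j
    fin_cases j
    rfl
  have hx' : mapV V (SimplexCategory.δ (0 : Fin 2)) m x =
    mapV V (SimplexCategory.δ (1 : Fin 2)) m x := hx
  rw [← h0, ← h1, mapV_comp, mapV_comp, hx']

lemma unitFamily_mem (m : ℤ) (x : comp V 0 m) (hx : x ∈ kerSub V m) :
    unitFamily V m x ∈ totSub V m := by
  refine ⟨fun n r i hr => ?_, fun p q f r i => ?_⟩
  · cases r with
    | zero => exact unitFamily_of_ne V (by simpa using hr) x n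
    | succ r => rfl
  · cases r with
    | zero =>
      rcases eq_or_ne i m with rfl | h
      · rw [unitFamily_self, unitFamily_self, LinearMap.lTensor_tmul, LinearMap.rTensor_tmul,
          pull_unit, ← mapV_vertex_eq V hx (vertex p ≫ f), mapV_comp]
      · rw [unitFamily_of_ne V h, unitFamily_of_ne V h, map_zero, map_zero]
    | succ r => rw [unitFamily_succ, unitFamily_succ, map_zero, map_zero]

lemma totD_unitFamily {m m' : ℤ} (h : m + 1 = m') (x : comp V 0 m) :
    totD V (unitFamily V m x) = unitFamily V m' (dV V 0 m m' x) := by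
  obtain rfl : m = m' - 1 := by omega
  funext n p i
  match p with
  | 0 =>
    rw [totD_zero]
    rcases eq_or_ne i m' with rfl | hi
    · rw [unitFamily_self, unitFamily_self, LinearMap.lTensor_tmul, dV_mapV]
    · rw [unitFamily_of_ne V (by omega), unitFamily_of_ne V hi, map_zero]
  | 1 =>
    rw [totD_succ, unitFamily_succ, unitFamily_succ, map_zero, smul_zero, add_zero]
    rcases eq_or_ne i (m' - 1) with rfl | hi
    · rw [unitFamily_self, LinearMap.rTensor_tmul, deRham_unit, TensorProduct.zero_tmul]
    · rw [unitFamily_of_ne V hi, map_zero]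
  | p + 2 =>
    rw [totD_succ, unitFamily_succ, unitFamily_succ, unitFamily_succ]
    simp

/-- The canonical map of complexes `ker(V⁰ ⇉ V¹) → Tot(V)`, `a ↦ 1 ⊗ a`. -/
def kerToTot : ker V ⟶ Tot V where
  f m := ModuleCat.ofHom ((unitFamily V m).restrict (unitFamily_mem V m))
  comm' m m' h := by
    have hd : (Tot V).d m m' = ModuleCat.ofHom ((totD V).restrict (totD_mem V h)) := dif_pos h
    rw [hd]
    exact ModuleCat.hom_ext (LinearMap.ext fun x => Subtype.ext (totD_unitFamily V h x.1))

end CosimplicialTot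

end

/-!
The rows of `Tot V` are acyclic in positive form degree. Contracting a simplex to one of its
vertices gives the Poincaré lemma for polynomial forms, but the contraction depends on the vertex
and is not natural in the simplex. To repair this, compatible families of forms are resolved by
families `b t` indexed by tuples `t` of vertices, alternating in `t`. For a non-empty tuple the
mean of the contractions to its vertices is natural, so `d` is exact on families indexed by
non-empty tuples. The Čech differential is contracted by `b ↦ ∑ⱼ tⱼ b(j, ·)`, because
`∑ⱼ tⱼ = 1`. In this double complex the obstruction to a natural primitive of a closed form lies in
the complex of alternating cochains with constant coefficients, which is the normalized complex of
`V^{•,i}`, exact by assumption.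

A cocycle of `Tot V` can therefore be stripped of its component of highest form degree by
subtracting a coboundary. Boundedness of `V` makes this descent start, and it stops at a closed
family of form degree zero, which is constant, that is of the form `1 ⊗ a`.
-/

noncomputable section

namespace PolyDeRham

section EulerOperator

open MvPolynomial

variable {σ τ k : Type*} [Field k]

/-- The operator multiplying the homogeneous part of degree `d` by `1 / (d + q)`, that is
`f ↦ ∫₀¹ s ^ (q - 1) f(s t) ds` for `q ≠ 0`. For `q = 0` the convention `0⁻¹ = 0` makes it kill
constants. -/
def eulerInv (q : ℕ) : MvPolynomial σ k →ₗ[k] MvPolynomial σ k :=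
  (basisMonomials σ k).constr k fun s => ((s.degree + q : ℕ) : k)⁻¹ • monomial s 1

lemma hom_ext_of_isHomogeneous {P : Type*} [AddCommMonoid P] [Module k P]
    {g h : MvPolynomial σ k →ₗ[k] P} (H : ∀ d f, f.IsHomogeneous d → g f = h f) : g = h :=
  (basisMonomials σ k).ext fun s => H s.degree _ (isHomogeneous_monomial 1 rfl)

lemma eulerInv_of_isHomogeneous {f : MvPolynomial σ k} {d : ℕ} (hf : f.IsHomogeneous d) (q : ℕ) :
    eulerInv q f = ((d + q : ℕ) : k)⁻¹ • f := by
  conv_lhs => rw [f.as_sum]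
  conv_rhs => rw [f.as_sum]
  rw [map_sum, Finset.smul_sum]
  refine Finset.sum_congr rfl fun s hs => ?_
  have hbasis : eulerInv q (monomial s (1 : k)) = ((s.degree + q : ℕ) : k)⁻¹ • monomial s 1 :=
    (basisMonomials σ k).constr_basis k _ s
  have hs' : s.degree = d := (hf.degree_eq_sum_deg_support hs).symm
  rw [← mul_one (coeff s f), ← smul_eq_mul, ← smul_monomial, map_smul, hbasis, smul_comm, hs']

lemma pderiv_eq_zero_of_isHomogeneous_zero {f : MvPolynomial σ k} (hf : f.IsHomogeneous 0) (i : σ) :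
    pderiv i f = 0 := by
  rw [totalDegree_eq_zero_iff_eq_C.mp ((totalDegree_zero_iff_isHomogeneous _).mpr hf), pderiv_C]

lemma pderiv_eulerInv (q : ℕ) (i : σ) (f : MvPolynomial σ k) :
    pderiv i (eulerInv q f) = eulerInv (q + 1) (pderiv i f) := by
  suffices h : (pderiv i).toLinearMap ∘ₗ eulerInv q = eulerInv (q + 1) ∘ₗ (pderiv i).toLinearMap
    from LinearMap.congr_fun h f
  refine hom_ext_of_isHomogeneous fun d f hf => ?_
  simp only [LinearMap.comp_apply, Derivation.coeFn_coe, eulerInv_of_isHomogeneous hf,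
    Derivation.map_smul]
  cases d with
  | zero => simp only [pderiv_eq_zero_of_isHomogeneous_zero hf, smul_zero, map_zero]
  | succ d =>
    rw [eulerInv_of_isHomogeneous hf.pderiv, Nat.add_sub_cancel, add_right_comm, add_assoc]

lemma eulerInv_mul {l : MvPolynomial σ k} {e : ℕ} (hl : l.IsHomogeneous e) (q : ℕ)
    (f : MvPolynomial σ k) : eulerInv q (l * f) = l * eulerInv (q + e) f := by
  suffices h : eulerInv q ∘ₗ LinearMap.mulLeft k l = LinearMap.mulLeft k l ∘ₗ eulerInv (q + e)
    from LinearMap.congr_fun h f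
  refine hom_ext_of_isHomogeneous fun d f hf => ?_
  simp only [LinearMap.comp_apply, LinearMap.mulLeft_apply, eulerInv_of_isHomogeneous hf,
    eulerInv_of_isHomogeneous (hl.mul hf), mul_smul_comm]
  rw [add_comm e, add_assoc, add_comm e]

lemma eulerInv_aeval {g : σ → MvPolynomial τ k} (hg : ∀ i, (g i).IsHomogeneous 1) (q : ℕ)
    (f : MvPolynomial σ k) : eulerInv q (aeval g f) = aeval g (eulerInv q f) := by
  suffices h : eulerInv q ∘ₗ (aeval g).toLinearMap = (aeval g).toLinearMap ∘ₗ eulerInv q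
    from LinearMap.congr_fun h f
  refine hom_ext_of_isHomogeneous fun d f hf => ?_
  simp only [LinearMap.comp_apply, AlgHom.toLinearMap_apply, eulerInv_of_isHomogeneous hf,
    eulerInv_of_isHomogeneous (hf.aeval g hg), map_smul, one_mul]

lemma sum_X_mul_eulerInv_pderiv [Fintype σ] [CharZero k] (q : ℕ) (f : MvPolynomial σ k) :
    ∑ i, X i * eulerInv (q + 2) (pderiv i f) + (q + 1) • eulerInv (q + 1) f = f := by
  suffices h : ∑ i, LinearMap.mulLeft k (X i) ∘ₗ eulerInv (q + 2) ∘ₗ (pderiv i).toLinearMap +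
      (q + 1) • eulerInv (q + 1) = LinearMap.id by
    simpa only [LinearMap.add_apply, LinearMap.sum_apply] using! LinearMap.congr_fun h f
  refine hom_ext_of_isHomogeneous fun d f hf => ?_
  have hdq : ((d + (q + 1) : ℕ) : k) ≠ 0 := Nat.cast_ne_zero.mpr (by omega)
  simp only [LinearMap.add_apply, LinearMap.sum_apply, LinearMap.comp_apply, Derivation.coeFn_coe,
    LinearMap.mulLeft_apply, LinearMap.smul_apply, LinearMap.id_apply, ← pderiv_eulerInv,
    eulerInv_of_isHomogeneous hf, Derivation.map_smul, mul_smul_comm, ← Finset.smul_sum,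
    hf.sum_X_mul_pderiv]
  rw [smul_comm (q + 1), ← smul_add, ← add_smul, ← Nat.cast_smul_eq_nsmul k, smul_smul,
    inv_mul_cancel₀ hdq, one_smul]

lemma sum_X_mul_eulerInv_one_pderiv [Fintype σ] [CharZero k] (f : MvPolynomial σ k) :
    ∑ i, X i * eulerInv 1 (pderiv i f) = f - C (constantCoeff f) := by
  suffices h : ∑ i, LinearMap.mulLeft k (X i) ∘ₗ eulerInv 1 ∘ₗ (pderiv i).toLinearMap =
      LinearMap.id - Algebra.linearMap k _ ∘ₗ lcoeff k 0 by
    simpa only [LinearMap.sum_apply] using! LinearMap.congr_fun h f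
  refine hom_ext_of_isHomogeneous fun d f hf => ?_
  simp only [LinearMap.sum_apply, LinearMap.comp_apply, Derivation.coeFn_coe,
    LinearMap.mulLeft_apply, LinearMap.sub_apply, LinearMap.id_apply,
    ← pderiv_eulerInv 0, eulerInv_of_isHomogeneous hf, Derivation.map_smul, mul_smul_comm,
    ← Finset.smul_sum, hf.sum_X_mul_pderiv, add_zero, lcoeff_apply, Algebra.linearMap_apply,
    algebraMap_eq]
  cases d with
  | zero =>
    rw [totalDegree_eq_zero_iff_eq_C.mp ((totalDegree_zero_iff_isHomogeneous _).mpr hf)]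
    simp
  | succ d =>
    rw [hf.coeff_eq_zero (by simp), C_0, sub_zero, ← Nat.cast_smul_eq_nsmul k,
      smul_smul, inv_mul_cancel₀ (Nat.cast_ne_zero.mpr d.succ_ne_zero), one_smul]

/-- The substitution `t ↦ t + c`. -/
def translate (c : σ → k) : MvPolynomial σ k →ₐ[k] MvPolynomial σ k :=
  aeval fun i => X i + C (c i)

lemma translate_X (c : σ → k) (i : σ) : translate c (X i) = X i + C (c i) :=
  aeval_X _ i

lemma translate_C (c : σ → k) (a : k) : translate c (C a) = C a :=
  aeval_C _ a

lemma translate_neg_translate (c : σ → k) (f : MvPolynomial σ k) :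
    translate (-c) (translate c f) = f := by
  suffices h : (translate (-c)).comp (translate c) = AlgHom.id k _ from AlgHom.congr_fun h f
  ext i : 1
  simp [translate]

lemma pderiv_translate (c : σ → k) (i : σ) (f : MvPolynomial σ k) :
    pderiv i (translate c f) = translate c (pderiv i f) := by
  induction f using MvPolynomial.induction_on with
  | C a => simp [translate]
  | add f g hf hg => simp only [map_add, hf, hg]
  | mul_X f j hf =>
    have hX : translate c (pderiv i (X j)) = pderiv i (X j) := by
      obtain rfl | h := eq_or_ne i j
      · rw [pderiv_X_self, map_one]
      · rw [pderiv_X_of_ne h.symm, map_zero]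
    simp only [map_mul, map_add, translate_X, pderiv_mul, pderiv_C, hf, hX, add_zero]

lemma constantCoeff_translate (c : σ → k) (f : MvPolynomial σ k) :
    constantCoeff (translate c f) = eval c f := by
  suffices h : (constantCoeff (σ := σ) (R := k)).comp (translate c : _ →+* _) = eval c from
    RingHom.congr_fun h f
  ext <;> simp [translate]

/-- The operator `eulerInv q` centred at `c` instead of the origin. -/
def conePoly (c : σ → k) (q : ℕ) : MvPolynomial σ k →ₗ[k] MvPolynomial σ k :=
  (translate (-c)).toLinearMap ∘ₗ eulerInv q ∘ₗ (translate c).toLinearMap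

lemma conePoly_apply (c : σ → k) (q : ℕ) (f : MvPolynomial σ k) :
    conePoly c q f = translate (-c) (eulerInv q (translate c f)) := rfl

lemma pderiv_conePoly (c : σ → k) (q : ℕ) (i : σ) (f : MvPolynomial σ k) :
    pderiv i (conePoly c q f) = conePoly c (q + 1) (pderiv i f) := by
  rw [conePoly_apply, pderiv_translate, pderiv_eulerInv, pderiv_translate, conePoly_apply]

lemma pderiv_X_mul_conePoly [DecidableEq σ] (c : σ → k) (q : ℕ) (i l : σ) (f : MvPolynomial σ k) :
    pderiv i (X l * conePoly c q f) =
      X l * conePoly c (q + 1) (pderiv i f) + if i = l then conePoly c q f else 0 := by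
  rw [pderiv_mul, pderiv_conePoly, add_comm]
  obtain rfl | h := eq_or_ne i l
  · rw [pderiv_X_self, one_mul, if_pos rfl]
  · rw [pderiv_X_of_ne h.symm, zero_mul, if_neg h]

lemma sum_sub_mul_conePoly_pderiv [Fintype σ] [CharZero k] (c : σ → k) (q : ℕ)
    (f : MvPolynomial σ k) :
    ∑ i, (X i - C (c i)) * conePoly c (q + 2) (pderiv i f) + (q + 1) • conePoly c (q + 1) f =
      f := by
  have h := congrArg (translate (-c)) (sum_X_mul_eulerInv_pderiv q (translate c f))
  simpa only [map_add, map_sum, map_mul, map_nsmul, translate_X, Pi.neg_apply, C_neg,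
    ← sub_eq_add_neg, pderiv_translate, ← conePoly_apply, translate_neg_translate] using h

lemma sum_sub_mul_conePoly_one_pderiv [Fintype σ] [CharZero k] (c : σ → k)
    (f : MvPolynomial σ k) :
    ∑ i, (X i - C (c i)) * conePoly c 1 (pderiv i f) = f - C (eval c f) := by
  have h := congrArg (translate (-c)) (sum_X_mul_eulerInv_one_pderiv (translate c f))
  simpa only [map_sub, map_sum, map_mul, translate_X, Pi.neg_apply, C_neg, ← sub_eq_add_neg,
    pderiv_translate, ← conePoly_apply, translate_neg_translate, constantCoeff_translate,
    translate_C] using h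

end EulerOperator

section Contraction

variable {R M N : Type*} [CommRing R] [AddCommGroup M] [Module R M] [AddCommGroup N] [Module R N]

lemma contractLeft_mem (θ : Module.Dual R M) (p : ℕ) (x : ExteriorAlgebra R M)
    (hx : x ∈ ⋀[R]^(p + 1) M) : CliffordAlgebra.contractLeft θ x ∈ ⋀[R]^p M := by
  induction p generalizing x with
  | zero =>
    change x ∈ LinearMap.range (ExteriorAlgebra.ι R) ^ (0 + 1) at hx
    rw [zero_add, pow_one] at hx
    obtain ⟨v, rfl⟩ := hx
    change _ ∈ LinearMap.range (ExteriorAlgebra.ι R) ^ 0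
    rw [ExteriorAlgebra.ι, CliffordAlgebra.contractLeft_ι, pow_zero]
    exact Submodule.algebraMap_mem _
  | succ p ih =>
    change x ∈ LinearMap.range (ExteriorAlgebra.ι R) ^ (p + 1 + 1) at hx
    rw [pow_succ'] at hx
    induction hx using Submodule.mul_induction_on' with
    | mem_mul_mem a ha b hb =>
      obtain ⟨v, rfl⟩ := ha
      rw [ExteriorAlgebra.ι, CliffordAlgebra.contractLeft_ι_mul]
      refine Submodule.sub_mem _ (Submodule.smul_mem _ _ hb) ?_
      change _ ∈ LinearMap.range (ExteriorAlgebra.ι R) ^ (p + 1)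
      rw [pow_succ']
      exact Submodule.mul_mem_mul ⟨v, rfl⟩ (ih b hb)
    | add a _ b _ ha hb => rw [map_add]; exact Submodule.add_mem _ ha hb

/-- Contraction (interior product) of exterior powers with a linear form. -/
def contr (θ : Module.Dual R M) (p : ℕ) : ⋀[R]^(p + 1) M →ₗ[R] ⋀[R]^p M :=
  (CliffordAlgebra.contractLeft θ).restrict (contractLeft_mem θ p)

lemma contr_coe (θ : Module.Dual R M) (p : ℕ) (x : ⋀[R]^(p + 1) M) :
    (contr θ p x : ExteriorAlgebra R M) =
      CliffordAlgebra.contractLeft θ (x : ExteriorAlgebra R M) := rfl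

lemma contractLeft_map (g : M →ₗ[R] N) (θ : Module.Dual R N) (x : ExteriorAlgebra R M) :
    CliffordAlgebra.contractLeft θ (ExteriorAlgebra.map g x) =
      ExteriorAlgebra.map g (CliffordAlgebra.contractLeft (θ ∘ₗ g) x) := by
  induction x using CliffordAlgebra.left_induction with
  | algebraMap c => simp only [AlgHom.commutes, CliffordAlgebra.contractLeft_algebraMap, map_zero]
  | add x y hx hy => simp only [map_add, hx, hy]
  | ι_mul x v hx =>
    rw [map_mul, ← ExteriorAlgebra.ι, ExteriorAlgebra.map_apply_ι, ExteriorAlgebra.ι,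
      CliffordAlgebra.contractLeft_ι_mul, ExteriorAlgebra.ι, CliffordAlgebra.contractLeft_ι_mul,
      hx, map_sub, map_smul, map_mul, ← ExteriorAlgebra.ι, ExteriorAlgebra.map_apply_ι]
    rfl

end Contraction

section ContractionWedge

variable {k : Type u} [Field k] {M N : Type u} [AddCommGroup M] [Module k M]
  [AddCommGroup N] [Module k N]

lemma contr_map (g : M →ₗ[k] N) (θ : Module.Dual k N) (p : ℕ) (x : ⋀[k]^(p + 1) M) :
    contr θ p (exteriorPower.map (p + 1) g x) = exteriorPower.map p g (contr (θ ∘ₗ g) p x) := by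
  apply Subtype.ext
  rw [contr_coe, map_coe, map_coe, contr_coe, contractLeft_map]

lemma contr_wedge (θ : Module.Dual k M) (p : ℕ) (v : M) (x : ⋀[k]^(p + 1) M) :
    contr θ (p + 1) (wedge (p + 1) v x) = θ v • x - wedge p v (contr θ p x) :=
  Subtype.ext (CliffordAlgebra.contractLeft_ι_mul θ v _)

lemma contr_wedge_zero (θ : Module.Dual k M) (v : M) (x : ⋀[k]^0 M) :
    contr θ 0 (wedge 0 v x) = θ v • x := by
  apply Subtype.ext
  have hx : (x : ExteriorAlgebra k M) ∈ LinearMap.range (ExteriorAlgebra.ι k (M := M)) ^ 0 := x.2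
  rw [pow_zero] at hx
  obtain ⟨c, hc⟩ := Submodule.mem_one.mp hx
  rw [contr_coe, wedge_coe, ExteriorAlgebra.ι, CliffordAlgebra.contractLeft_ι_mul, ← hc,
    CliffordAlgebra.contractLeft_algebraMap, mul_zero, sub_zero, hc]
  rfl

lemma wedge_hom_ext {p : ℕ} {P : Type*} [AddCommGroup P] [Module k P]
    {g h : ⋀[k]^(p + 1) M →ₗ[k] P} (H : ∀ v x, g (wedge p v x) = h (wedge p v x)) : g = h := by
  apply exteriorPower.linearMap_ext
  ext v
  have hv : exteriorPower.ιMulti k (p + 1) v =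
      wedge p (v 0) (exteriorPower.ιMulti k p (fun i => v i.succ)) := by
    apply Subtype.ext
    rw [wedge_coe, exteriorPower.ιMulti_apply_coe, exteriorPower.ιMulti_apply_coe,
      ExteriorAlgebra.ιMulti_succ_apply]
    rfl
  simp only [LinearMap.compAlternatingMap_apply, hv, H]

end ContractionWedge

section Edge

variable {k : Type u} [Field k] {n : ℕ}

/-- The linear form `dtᵢ ↦ δ_{il} - δ_{ij}`: pairing with the vector from vertex `j` to vertex
`l`. -/
def edge (l j : Fin (n + 1)) : Module.Dual k (Cov k n) :=
  Submodule.liftQ _ (LinearMap.proj (R := k) (φ := fun _ : Fin (n + 1) => k) l - LinearMap.proj j)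
    (by
      rw [Submodule.span_le, Set.singleton_subset_iff]
      exact LinearMap.mem_ker.mpr (sub_self (1 : k)))

lemma edge_cov (l j : Fin (n + 1)) (c : Fin (n + 1) → k) : edge l j (cov c) = c l - c j := rfl

lemma edge_pullCov {p q : ℕ} (f : Fin (p + 1) → Fin (q + 1)) (l j : Fin (p + 1)) :
    (edge l j : Module.Dual k (Cov k p)) ∘ₗ pullCov f = edge (f l) (f j) := by
  ext v
  obtain ⟨c, rfl⟩ := Submodule.mkQ_surjective _ v
  rfl

lemma cov_eq_sum (c : Fin (n + 1) → k) : (cov c : Cov k n) = ∑ i, c i • dt i := by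
  conv_lhs => rw [pi_eq_sum_univ' c, map_sum]
  simp only [map_smul, dt]

lemma sum_edge_smul_dt (j : Fin (n + 1)) (v : Cov k n) : ∑ l, edge l j v • dt l = v := by
  obtain ⟨c, rfl⟩ : ∃ c, cov c = v := Submodule.mkQ_surjective _ v
  simp only [edge_cov, sub_smul, Finset.sum_sub_distrib]
  rw [← Finset.smul_sum, sum_dt, smul_zero, sub_zero, ← cov_eq_sum]

lemma sum_edge_smul_wedge_dt (j : Fin (n + 1)) (p : ℕ) (v : Cov k n) (x : ⋀[k]^p (Cov k n)) :
    ∑ l, edge l j v • wedge p (dt l) x = wedge p v x := by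
  have h := congrArg (fun v => wedgeₗ (Cov k n) p v x) (sum_edge_smul_dt j v)
  simpa only [map_sum, map_smul, LinearMap.sum_apply, LinearMap.smul_apply] using! h

lemma sum_wedge_dt_contr_edge (j : Fin (n + 1)) (p : ℕ) (x : ⋀[k]^(p + 1) (Cov k n)) :
    ∑ l, wedge p (dt l) (contr (edge l j) p x) = (p + 1) • x := by
  suffices h : ∑ l, wedge p (dt l) ∘ₗ contr (edge l j) p =
      (p + 1) • (LinearMap.id : ⋀[k]^(p + 1) (Cov k n) →ₗ[k] _) by
    simpa only [LinearMap.sum_apply] using! LinearMap.congr_fun h x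
  clear x
  induction p with
  | zero =>
    refine wedge_hom_ext fun v x => ?_
    simp only [LinearMap.sum_apply, LinearMap.comp_apply, contr_wedge_zero, map_smul,
      sum_edge_smul_wedge_dt, zero_add, one_smul, LinearMap.id_apply]
  | succ p ih =>
    refine wedge_hom_ext fun v x => ?_
    have hx : ∑ l, wedge p (dt l) (contr (edge l j) p x) = (p + 1) • x := by
      simpa only [LinearMap.sum_apply] using! LinearMap.congr_fun ih x
    have hanti : ∑ l, wedge (p + 1) (dt l) (wedge p v (contr (edge l j) p x)) =
        -((p + 1) • wedge (p + 1) v x) := by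
      rw [← map_nsmul, ← hx, map_sum, ← Finset.sum_neg_distrib]
      exact Finset.sum_congr rfl fun l _ => eq_neg_of_add_eq_zero_left (wedge_wedge_add _ _ _ _)
    simp only [LinearMap.sum_apply, LinearMap.comp_apply, contr_wedge, map_smul, map_sub,
      Finset.sum_sub_distrib, sum_edge_smul_wedge_dt, hanti, LinearMap.smul_apply,
      LinearMap.id_apply]
    rw [sub_neg_eq_add]
    exact (succ_nsmul' _ _).symm

end Edge

section Cone

variable {k : Type u} [Field k] {n : ℕ}

open MvPolynomial (X C pderiv)

variable (k) in
/-- The barycentric coordinate `tᵢ` as a function on the simplex. -/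
def coord (i : Fin (n + 1)) : Fun k n := poly (X i)

lemma sum_coord : ∑ i, coord k i = (1 : Fun k n) := by
  have h : poly (∑ i, X i - 1 : MvPolynomial (Fin (n + 1)) k) = 0 :=
    Ideal.Quotient.eq_zero_iff_mem.mpr (Ideal.subset_span rfl)
  rwa [map_sub, map_one, sub_eq_zero, map_sum] at h

lemma pullFun_coord {p q : ℕ} (f : Fin (p + 1) → Fin (q + 1)) (j : Fin (q + 1)) :
    pullFun f (coord k j) = ∑ i with f i = j, coord k i := by
  rw [coord, pullFun_poly, pullPoly, MvPolynomial.aeval_X, map_sum]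
  rfl

lemma conePoly_mem (j : Fin (n + 1)) (q : ℕ) (f : MvPolynomial (Fin (n + 1)) k)
    (hf : f ∈ relIdeal k n) : conePoly (Pi.single j 1) q f ∈ relIdeal k n := by
  obtain ⟨g, rfl⟩ := Ideal.mem_span_singleton'.mp hf
  set s : MvPolynomial (Fin (n + 1)) k := ∑ i, X i
  set c : Fin (n + 1) → k := Pi.single j 1
  have hc : ∑ i, (C (c i) : MvPolynomial (Fin (n + 1)) k) = 1 := by
    rw [← map_sum, Finset.sum_pi_single' j 1, if_pos (Finset.mem_univ j), map_one]
  have hs : s.IsHomogeneous 1 :=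
    MvPolynomial.IsHomogeneous.sum _ _ _ fun i _ => MvPolynomial.isHomogeneous_X k i
  have htrans : translate c (s - 1) = s := by
    simp only [s, map_sub, map_sum, translate_X, Finset.sum_add_distrib, hc, map_one,
      add_sub_cancel_right]
  have htrans_neg : translate (-c) s = s - 1 := by rw [← htrans, translate_neg_translate, htrans]
  rw [conePoly_apply, map_mul, htrans, mul_comm, eulerInv_mul hs, map_mul, htrans_neg]
  exact Ideal.mul_mem_right _ _ (Ideal.subset_span rfl)

/-- The operator `conePoly` centred at the vertex `j`, on polynomial functions on the simplex. -/
def coneFun (j : Fin (n + 1)) (q : ℕ) : Fun k n →ₗ[k] Fun k n :=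
  Submodule.mapQ ((relIdeal k n).restrictScalars k) ((relIdeal k n).restrictScalars k)
    (conePoly (Pi.single j 1) q) (conePoly_mem j q)

lemma coneFun_poly (j : Fin (n + 1)) (q : ℕ) (f : MvPolynomial (Fin (n + 1)) k) :
    coneFun j q (poly f) = poly (conePoly (Pi.single j 1) q f) := rfl

lemma translate_pullPoly {p q : ℕ} (f : Fin (p + 1) → Fin (q + 1)) (c : Fin (p + 1) → k)
    (g : MvPolynomial (Fin (q + 1)) k) :
    translate c (pullPoly f g) = pullPoly f (translate (fun j => ∑ i with f i = j, c i) g) := by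
  suffices h : (translate c).comp (pullPoly f) =
      (pullPoly f).comp (translate fun j => ∑ i with f i = j, c i) from AlgHom.congr_fun h g
  ext j : 1
  simp only [AlgHom.comp_apply, translate_X, pullPoly, map_add, map_sum, MvPolynomial.aeval_X,
    Finset.sum_add_distrib, MvPolynomial.aeval_C, MvPolynomial.algebraMap_eq]

lemma pullFun_coneFun {p q : ℕ} (f : Fin (p + 1) → Fin (q + 1)) (j : Fin (p + 1)) (d : ℕ)
    (g : Fun k q) : pullFun f (coneFun (f j) d g) = coneFun j d (pullFun f g) := by
  obtain ⟨g, rfl⟩ : ∃ g', poly g' = g := Ideal.Quotient.mkₐ_surjective k _ g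
  have hX (i : Fin (q + 1)) :
      (∑ l with f l = i, X l : MvPolynomial (Fin (p + 1)) k).IsHomogeneous 1 :=
    MvPolynomial.IsHomogeneous.sum _ _ _ fun i _ => MvPolynomial.isHomogeneous_X k i
  have hvertex (i : Fin (q + 1)) :
      ∑ l with f l = i, (Pi.single j 1 : _ → k) l = (Pi.single (f j) 1 : _ → k) i := by
    rw [Finset.sum_pi_single', Pi.single_apply]
    simp only [Finset.mem_filter, Finset.mem_univ, true_and, eq_comm]
  rw [coneFun_poly, pullFun_poly, pullFun_poly, coneFun_poly, conePoly_apply, conePoly_apply,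
    translate_pullPoly, pullPoly, eulerInv_aeval hX, ← pullPoly, translate_pullPoly]
  simp only [Pi.neg_apply, Finset.sum_neg_distrib, hvertex]
  rfl

variable (k n) in
/-- Multiplication of forms by a function. -/
def mulForm (p : ℕ) : Fun k n →ₗ[k] Module.End k (Form k n p) :=
  (LinearMap.rTensorHom (⋀[k]^p (Cov k n))) ∘ₗ LinearMap.mul k (Fun k n)

lemma mulForm_mk {p : ℕ} (g f : Fun k n) (x : ⋀[k]^p (Cov k n)) :
    mulForm k n p g (Form.mk f x) = Form.mk (g * f) x := rfl

lemma mulForm_one (p : ℕ) : mulForm k n p 1 = LinearMap.id :=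
  form_ext fun f x => by rw [mulForm_mk, one_mul, LinearMap.id_apply]

lemma pull_mulForm {p q r : ℕ} (f : Fin (p + 1) → Fin (q + 1)) (g : Fun k q) :
    pull r f ∘ₗ mulForm k q r g = mulForm k p r (pullFun f g) ∘ₗ pull r f :=
  form_ext fun a x => by simp only [LinearMap.comp_apply, mulForm_mk, pull_mk, map_mul]

/-- The homotopy operator contracting forms on the simplex to the vertex `j`. -/
def coneForm (j : Fin (n + 1)) (p : ℕ) : Form k n (p + 1) →ₗ[k] Form k n p :=
  ∑ l, mulForm k n p (coord k l) ∘ₗ Form.toTensor.symm.toLinearMap ∘ₗ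
    TensorProduct.map (coneFun j (p + 1)) (contr (edge l j) p) ∘ₗ Form.toTensor.toLinearMap

lemma coneForm_mk (j : Fin (n + 1)) (p : ℕ) (f : Fun k n) (x : ⋀[k]^(p + 1) (Cov k n)) :
    coneForm j p (Form.mk f x) =
      ∑ l, Form.mk (coord k l * coneFun j (p + 1) f) (contr (edge l j) p x) :=
  LinearMap.sum_apply _ _ _

lemma pull_coneForm {p q : ℕ} (f : Fin (p + 1) → Fin (q + 1)) (j : Fin (p + 1)) (r : ℕ) :
    pull r f ∘ₗ coneForm (k := k) (f j) r = coneForm j r ∘ₗ pull (r + 1) f := by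
  refine form_ext fun g x => ?_
  simp only [LinearMap.comp_apply, coneForm_mk, map_sum, pull_mk, map_mul, pullFun_coneFun,
    pullFun_coord, contr_map, edge_pullCov, Finset.sum_mul, LinearMap.sum_apply]
  rw [← Finset.sum_fiberwise (g := f)]
  refine Finset.sum_congr rfl fun l _ => Finset.sum_congr rfl fun i hi => ?_
  rw [(Finset.mem_filter.mp hi).2]

lemma sum_mk_edge_dt_smul (j : Fin (n + 1)) (p : ℕ) (f : Fin (n + 1) → MvPolynomial (Fin (n + 1)) k)
    (y : ⋀[k]^p (Cov k n)) :
    ∑ i, ∑ l, Form.mk (coord k l * poly (f i)) (edge l j (dt i : Cov k n) • y) =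
      Form.mk (poly (∑ i, (X i - C ((Pi.single j 1 : _ → k) i)) * f i)) y := by
  have hsum (i : Fin (n + 1)) : ∑ l, edge l j (dt i : Cov k n) • coord k l =
      poly (X i - C ((Pi.single j 1 : _ → k) i)) := by
    have hsingle : ∑ l, (Pi.single i 1 : _ → k) l • coord k l = (coord k i : Fun k n) := by
      simp only [Pi.single_apply, ite_smul, one_smul, zero_smul, Finset.sum_ite_eq',
        Finset.mem_univ, if_true]
    simp only [dt, edge_cov, sub_smul, Finset.sum_sub_distrib, hsingle]
    rw [← Finset.smul_sum, sum_coord, map_sub, ← MvPolynomial.algebraMap_eq, AlgHom.commutes,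
      Algebra.algebraMap_eq_smul_one, Pi.single_comm, coord]
  simp only [map_sum, map_mul, ← hsum, Finset.sum_mul, LinearMap.sum_apply, map_smul,
    smul_mul_assoc, LinearMap.smul_apply]

lemma deRham_coneForm_add [CharZero k] (j : Fin (n + 1)) (p : ℕ) :
    deRham k n p ∘ₗ coneForm j p + coneForm j (p + 1) ∘ₗ deRham k n (p + 1) = LinearMap.id := by
  refine form_ext fun f x => ?_
  set c : Fin (n + 1) → k := Pi.single j 1
  have hd : deRham k n p (coneForm j p (Form.mk (poly f) x)) =
      ∑ i, ∑ l, Form.mk (poly (X l * conePoly c (p + 2) (pderiv i f)))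
        (wedge p (dt i) (contr (edge l j) p x)) +
      Form.mk (poly (conePoly c (p + 1) f)) ((p + 1) • x) := by
    have hite (i l : Fin (n + 1)) (g : MvPolynomial (Fin (n + 1)) k)
        (y : ⋀[k]^(p + 1) (Cov k n)) : Form.mk (poly (if i = l then g else 0)) y =
          if i = l then Form.mk (poly g) y else 0 := by
      split_ifs <;> simp
    simp only [coneForm_mk, coneFun_poly, coord, ← map_mul, map_sum, deRham_mk, c,
      pderiv_X_mul_conePoly, map_add, LinearMap.add_apply, hite, Finset.sum_add_distrib,
      Finset.sum_ite_eq', Finset.mem_univ, if_true, ← sum_wedge_dt_contr_edge j]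
    rw [Finset.sum_comm]
  have hcone : coneForm j (p + 1) (deRham k n (p + 1) (Form.mk (poly f) x)) =
      Form.mk (poly (∑ i, (X i - C (c i)) * conePoly c (p + 2) (pderiv i f))) x -
      ∑ i, ∑ l, Form.mk (poly (X l * conePoly c (p + 2) (pderiv i f)))
        (wedge p (dt i) (contr (edge l j) p x)) := by
    simp only [deRham_mk, map_sum, coneForm_mk, contr_wedge, map_sub, Finset.sum_sub_distrib,
      coneFun_poly, sum_mk_edge_dt_smul, c]
    simp only [coord, ← map_mul, ← map_sum]
  have hcancel (s a b : Form k n (p + 1)) : s + a + (b - s) = b + a := by abel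
  rw [LinearMap.add_apply, LinearMap.comp_apply, LinearMap.comp_apply, hd, hcone, hcancel]
  conv_rhs => rw [LinearMap.id_apply, ← sum_sub_mul_conePoly_pderiv c p f]
  rw [map_add poly, map_add, LinearMap.add_apply, map_nsmul, map_nsmul, map_nsmul,
    LinearMap.smul_apply]

/-- Evaluation of polynomial functions at the vertex `j`. -/
def evalFun (j : Fin (n + 1)) : Fun k n →ₐ[k] k :=
  Ideal.Quotient.liftₐ (relIdeal k n) (MvPolynomial.aeval (Pi.single j 1)) (fun f hf => by
    obtain ⟨g, rfl⟩ := Ideal.mem_span_singleton'.mp hf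
    simp)

lemma evalFun_poly (j : Fin (n + 1)) (f : MvPolynomial (Fin (n + 1)) k) :
    evalFun j (poly f) = MvPolynomial.eval (Pi.single j 1) f := by
  rw [← MvPolynomial.aeval_eq_eval]
  rfl

/-- Evaluation of forms of degree zero at the vertex `j`. -/
def evalForm (j : Fin (n + 1)) : Form k n 0 →ₗ[k] k :=
  LinearMap.mul' k k ∘ₗ
    TensorProduct.map (evalFun j).toLinearMap (exteriorPower.zeroEquiv k (Cov k n)).toLinearMap ∘ₗ
      Form.toTensor.toLinearMap

lemma evalForm_mk (j : Fin (n + 1)) (f : Fun k n) (x : ⋀[k]^0 (Cov k n)) :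
    evalForm j (Form.mk f x) = evalFun j f * exteriorPower.zeroEquiv k (Cov k n) x := rfl

lemma evalForm_unit (j : Fin (n + 1)) : evalForm j (unit k n) = 1 := by
  rw [unit, evalForm_mk, map_one, exteriorPower.zeroEquiv_ιMulti, one_mul]

lemma evalForm_smul_unit (j : Fin (n + 1)) (f : MvPolynomial (Fin (n + 1)) k)
    (x : ⋀[k]^0 (Cov k n)) : evalForm j (Form.mk (poly f) x) • unit k n =
      Form.mk (poly (C (MvPolynomial.eval (Pi.single j 1) f))) x := by
  have hx : exteriorPower.zeroEquiv k (Cov k n) x • exteriorPower.ιMulti k 0 Fin.elim0 = x := by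
    apply (exteriorPower.zeroEquiv k (Cov k n)).injective
    rw [map_smul, exteriorPower.zeroEquiv_ιMulti, smul_eq_mul, mul_one]
  rw [evalForm_mk, evalFun_poly, unit, mul_smul, ← map_smul, hx, ← LinearMap.smul_apply,
    ← map_smul, ← MvPolynomial.algebraMap_eq, AlgHom.commutes, Algebra.algebraMap_eq_smul_one]

lemma coneForm_deRham_zero [CharZero k] (j : Fin (n + 1)) :
    coneForm j 0 ∘ₗ deRham k n 0 + (LinearMap.toSpanSingleton k _ (unit k n)) ∘ₗ evalForm j =
      LinearMap.id := by
  refine form_ext fun f x => ?_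
  simp only [LinearMap.add_apply, LinearMap.comp_apply, LinearMap.id_apply, coneForm_mk, deRham_mk,
    map_sum, contr_wedge_zero, coneFun_poly, sum_mk_edge_dt_smul, sum_sub_mul_conePoly_one_pderiv,
    LinearMap.toSpanSingleton_apply, evalForm_smul_unit]
  simp

end Cone

section Coefficients

variable {k : Type u} [Field k] {n : ℕ} {X : Type*} [AddCommGroup X] [Module k X]

lemma rTensor_comm_apply {M N N' P : Type*} [AddCommGroup M] [Module k M] [AddCommGroup N]
    [Module k N] [AddCommGroup N'] [Module k N'] [AddCommGroup P] [Module k P] {g : N →ₗ[k] P}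
    {f : M →ₗ[k] N} {g' : N' →ₗ[k] P} {f' : M →ₗ[k] N'} (h : g ∘ₗ f = g' ∘ₗ f') (x : M ⊗[k] X) :
    g.rTensor X (f.rTensor X x) = g'.rTensor X (f'.rTensor X x) := by
  simp only [← LinearMap.comp_apply, ← LinearMap.rTensor_comp, h]

/-- The mean of the cone operators centred at the vertices of a tuple. Unlike a single cone
operator, it depends neither on the order of the vertices nor on a choice of one of them. -/
def meanCone {m : ℕ} (t : Fin m → Fin (n + 1)) (p : ℕ) : Form k n (p + 1) →ₗ[k] Form k n p :=
  (m : k)⁻¹ • ∑ a, coneForm (t a) p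

lemma meanCone_comp_perm {m : ℕ} (t : Fin m → Fin (n + 1)) (π : Equiv.Perm (Fin m)) (p : ℕ) :
    (meanCone (t ∘ π) p : Form k n (p + 1) →ₗ[k] Form k n p) = meanCone t p :=
  congrArg _ (Equiv.sum_comp π fun a => coneForm (t a) p)

lemma pull_meanCone {m p q : ℕ} (f : Fin (p + 1) → Fin (q + 1)) (t : Fin m → Fin (p + 1))
    (r : ℕ) :
    pull r f ∘ₗ meanCone (k := k) (f ∘ t) r = meanCone t r ∘ₗ pull (r + 1) f := by
  ext x
  simp only [meanCone, LinearMap.comp_apply, LinearMap.smul_apply, LinearMap.sum_apply, map_smul,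
    map_sum, Function.comp_apply]
  exact congrArg _ (Finset.sum_congr rfl fun a _ => LinearMap.congr_fun (pull_coneForm f (t a) r) x)

lemma deRham_meanCone_add [CharZero k] {m : ℕ} (t : Fin (m + 1) → Fin (n + 1)) (p : ℕ) :
    deRham k n p ∘ₗ meanCone t p + meanCone t (p + 1) ∘ₗ deRham k n (p + 1) = LinearMap.id := by
  ext x
  have hcone (a : Fin (m + 1)) : deRham k n p (coneForm (t a) p x) +
      coneForm (t a) (p + 1) (deRham k n (p + 1) x) = x :=
    LinearMap.congr_fun (deRham_coneForm_add (t a) p) x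
  simp only [meanCone, LinearMap.add_apply, LinearMap.comp_apply, LinearMap.smul_apply,
    LinearMap.sum_apply, map_smul, map_sum, ← smul_add, ← Finset.sum_add_distrib, hcone,
    Finset.sum_const, Finset.card_univ, Fintype.card_fin, ← Nat.cast_smul_eq_nsmul k,
    LinearMap.id_apply]
  exact inv_smul_smul₀ (Nat.cast_ne_zero.mpr m.succ_ne_zero) x

lemma rTensor_deRham_meanCone [CharZero k] {m p : ℕ} (t : Fin (m + 1) → Fin (n + 1))
    (x : Form k n (p + 1) ⊗[k] X) (hx : (deRham k n (p + 1)).rTensor X x = 0) :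
    (deRham k n p).rTensor X ((meanCone t p).rTensor X x) = x := by
  have h := LinearMap.congr_fun (congrArg (LinearMap.rTensor X) (deRham_meanCone_add t p)) x
  simpa only [LinearMap.rTensor_add, LinearMap.rTensor_comp, LinearMap.add_apply,
    LinearMap.comp_apply, hx, map_zero, add_zero, LinearMap.rTensor_id, LinearMap.id_apply] using h

/-- The value at the vertex `j` of a form of degree zero with coefficients in `X`. -/
def evalTensor (j : Fin (n + 1)) : Form k n 0 ⊗[k] X →ₗ[k] X :=
  (TensorProduct.lid k X).toLinearMap ∘ₗ (evalForm j).rTensor X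

lemma evalTensor_unit_tmul (j : Fin (n + 1)) (x : X) : evalTensor j (unit k n ⊗ₜ[k] x) = x := by
  simp [evalTensor, evalForm_unit]

lemma unit_tmul_evalTensor (j : Fin (n + 1)) (x : Form k n 0 ⊗[k] X) :
    unit k n ⊗ₜ evalTensor j x =
      (LinearMap.toSpanSingleton k _ (unit k n) ∘ₗ evalForm j).rTensor X x := by
  induction x with
  | zero => simp only [map_zero, tmul_zero]
  | tmul f x => simp [evalTensor, smul_tmul]
  | add x y hx hy => rw [map_add, tmul_add, hx, hy, map_add]

lemma unit_tmul_evalTensor_of_closed [CharZero k] (j : Fin (n + 1)) (x : Form k n 0 ⊗[k] X)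
    (hx : (deRham k n 0).rTensor X x = 0) : unit k n ⊗ₜ evalTensor j x = x := by
  have h := LinearMap.congr_fun (congrArg (LinearMap.rTensor X) (coneForm_deRham_zero (k := k) j)) x
  rwa [LinearMap.rTensor_add, LinearMap.add_apply, ← unit_tmul_evalTensor, LinearMap.rTensor_comp,
    LinearMap.comp_apply, hx, map_zero, zero_add, LinearMap.rTensor_id, LinearMap.id_apply] at h

variable (k n X) in
/-- Multiplication of forms with coefficients in `X` by a function. -/
def mulTensor (p : ℕ) : Fun k n →ₗ[k] Module.End k (Form k n p ⊗[k] X) :=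
  LinearMap.rTensorHom X ∘ₗ mulForm k n p

lemma mulTensor_one (p : ℕ) : mulTensor k n X p 1 = LinearMap.id :=
  (congrArg (LinearMap.rTensor X) (mulForm_one p)).trans (LinearMap.rTensor_id X _)

end Coefficients

end PolyDeRham

namespace CechTuple

open Equiv.Perm (sign)

variable {ι X Y : Type*} [AddCommGroup X] [AddCommGroup Y] {m : ℕ}

/-- The Čech differential of a function on `m`-tuples. -/
def cech : ((Fin m → ι) → X) →+ ((Fin (m + 1) → ι) → X) where
  toFun c t := ∑ l : Fin (m + 1), (-1 : ℤ) ^ (l : ℕ) • c (t ∘ l.succAbove)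
  map_zero' := by
    funext t
    simp only [Pi.zero_apply, smul_zero, Finset.sum_const_zero]
  map_add' c c' := by
    funext t
    simp only [Pi.add_apply, smul_add, Finset.sum_add_distrib]

lemma cech_apply (c : (Fin m → ι) → X) (t : Fin (m + 1) → ι) :
    cech c t = ∑ l : Fin (m + 1), (-1 : ℤ) ^ (l : ℕ) • c (t ∘ l.succAbove) := rfl

lemma cech_zero_apply (c : (Fin 0 → ι) → X) (t : Fin 1 → ι) (s : Fin 0 → ι) :
    cech c t = c s := by
  simp [cech_apply, Subsingleton.elim (t ∘ Fin.succ) s]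

lemma cech_cons (c : (Fin (m + 1) → ι) → X) (j : ι) (t : Fin (m + 1) → ι) :
    cech c (Fin.cons j t) = c t - cech (fun s => c (Fin.cons j s)) t := by
  have hsucc (l : Fin (m + 1)) : (Fin.cons j t : Fin (m + 2) → ι) ∘ l.succ.succAbove =
      Fin.cons j (t ∘ l.succAbove) := by
    funext a
    cases a using Fin.cases <;> simp
  simp only [cech_apply, Fin.sum_univ_succ (n := m + 1), Fin.val_succ, pow_succ, mul_neg_one,
    neg_smul, Finset.sum_neg_distrib, ← sub_eq_add_neg, hsucc, Fin.val_zero, pow_zero, one_smul]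
  rfl

lemma map_cech {F : Type*} [FunLike F X Y] [AddMonoidHomClass F X Y] (g : F)
    (c : (Fin m → ι) → X) (t : Fin (m + 1) → ι) : g (cech c t) = cech (g ∘ c) t := by
  simp only [cech_apply, map_sum, map_zsmul, Function.comp_apply]

lemma cech_cech (c : (Fin m → ι) → X) : cech (cech c) = 0 := by
  induction m with
  | zero =>
    funext t
    rw [← Fin.cons_self_tail t, cech_cons, cech_zero_apply c _ Fin.elim0]
    simp only [cech_zero_apply _ _ (Fin.elim0 : Fin 0 → ι)]
    exact sub_self _
  | succ m ih =>
    funext t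
    have hcons : (fun s => cech c (Fin.cons (t 0) s)) = c - cech (fun s => c (Fin.cons (t 0) s)) :=
      funext (cech_cons c (t 0))
    rw [← Fin.cons_self_tail t, cech_cons, hcons, map_sub, ih, sub_zero, sub_self]
    rfl

variable (ι X m) in
/-- The functions on `m`-tuples on which permutations of the tuple act by their sign. -/
def alternating : AddSubgroup ((Fin m → ι) → X) where
  carrier := {c | ∀ t (π : Equiv.Perm (Fin m)), c (t ∘ π) = sign π • c t}
  zero_mem' t π := (smul_zero _).symm
  add_mem' hc hc' t π := by simp only [Pi.add_apply, hc t π, hc' t π, smul_add]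
  neg_mem' hc t π := by simp only [Pi.neg_apply, hc t π, smul_neg]

lemma cons_mem_alternating {c : (Fin (m + 1) → ι) → X} (hc : c ∈ alternating ι X (m + 1)) (j : ι) :
    (fun s => c (Fin.cons j s)) ∈ alternating ι X m := by
  intro t π
  have h := hc (Fin.cons j t) (Equiv.Perm.decomposeFin.symm (0, π))
  rw [Equiv.Perm.decomposeFin.symm_sign, if_pos rfl, one_mul] at h
  refine Eq.trans (congrArg c ?_) h
  funext a
  cases a using Fin.cases <;> simp

lemma sign_smul_comp_succ {c : (Fin m → ι) → X} (hc : c ∈ alternating ι X m)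
    (t : Fin (m + 1) → ι) (π : Equiv.Perm (Fin (m + 1))) :
    sign π • c (t ∘ π ∘ Fin.succ) = (-1 : ℤ) ^ (π 0 : ℕ) • c (t ∘ (π 0).succAbove) := by
  obtain ⟨⟨a, ρ⟩, hρ⟩ := Equiv.Perm.decomposeFin.symm.surjective ((π 0).cycleRange * π)
  obtain rfl : a = 0 := by
    have := congrArg (· 0) hρ
    simpa using this
  have hsucc : π ∘ Fin.succ = (π 0).succAbove ∘ ρ := by
    funext b
    have := congrArg ((π 0).cycleRange.symm <| · b.succ) hρ
    simpa using this.symm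
  have hsign : sign π = (-1) ^ (π 0 : ℕ) * sign ρ := by
    have := congrArg sign hρ
    rw [Equiv.Perm.decomposeFin.symm_sign, if_pos rfl, one_mul, map_mul,
      Fin.sign_cycleRange] at this
    rw [this, ← mul_assoc, Int.units_mul_self, one_mul]
  rw [hsucc, ← Function.comp_assoc, hc, smul_smul, hsign, mul_assoc, Int.units_mul_self, mul_one,
    Units.smul_def, Units.val_pow_eq_pow_val, Units.val_neg, Units.val_one]

lemma cech_mem_alternating {c : (Fin m → ι) → X} (hc : c ∈ alternating ι X m) :
    cech c ∈ alternating ι X (m + 1) := by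
  intro t τ
  have hterm (l : Fin (m + 1)) : (-1 : ℤ) ^ (l : ℕ) • c ((t ∘ τ) ∘ l.succAbove) =
      sign τ • (-1 : ℤ) ^ (τ l : ℕ) • c (t ∘ (τ l).succAbove) := by
    have h := sign_smul_comp_succ hc t (τ * l.cycleRange.symm)
    have h' := sign_smul_comp_succ hc (t ∘ τ) l.cycleRange.symm
    simp only [Equiv.Perm.mul_apply, Fin.cycleRange_symm_zero] at h h'
    rw [← h, ← h', map_mul, smul_smul, ← mul_assoc, Int.units_mul_self, one_mul]
    rfl
  simp only [cech_apply, hterm]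
  rw [← Finset.smul_sum]
  exact congrArg _ (Equiv.sum_comp τ fun l => (-1 : ℤ) ^ (l : ℕ) • c (t ∘ l.succAbove))

lemma eq_zero_of_mem_alternating [IsAddTorsionFree X] {c : (Fin m → ι) → X}
    (hc : c ∈ alternating ι X m) (t : Fin m → ι) (ht : ¬ Function.Injective t) : c t = 0 := by
  obtain ⟨a, b, h, hab⟩ := Function.not_injective_iff.mp ht
  have hswap : t ∘ Equiv.swap a b = t := by
    funext x
    rw [Function.comp_apply, Equiv.swap_apply_def]
    split_ifs with hx hx' <;> simp only [*]
  have hneg := hc t (Equiv.swap a b)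
  rw [hswap, Equiv.Perm.sign_swap hab, Units.neg_smul, one_smul] at hneg
  exact self_eq_neg.mp hneg

end CechTuple

namespace CosimplicialTot

section Normalization

open Simplicial AlgebraicTopology AlternatingCofaceMapComplex

universe v v'

section Preadditive

variable {C : Type v} [Category.{v'} C] [Preadditive C] (W : CosimplicialObject C)

/-- The simplicial object in `Cᵒᵖ` corresponding to a cosimplicial object in `C`. -/
abbrev opSimplicial : SimplicialObject Cᵒᵖ :=
  (cosimplicialSimplicialEquiv C).functor.obj (Opposite.op W)

/-- The dual of the Dold–Kan projection `PInfty`: an idempotent endomorphism of the alternating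
coface complex, here in degree `n`, with image the normalized cochains. -/
def normProj (n : ℕ) : W.obj ⦋n⦌ ⟶ W.obj ⦋n⦌ :=
  ((DoldKan.PInfty (X := opSimplicial W)).f n).unop

lemma normProj_comp_map {m : ℕ} {Δ : SimplexCategory} (f : ⦋m⦌ ⟶ Δ) (hf : ¬ Mono f) :
    normProj W m ≫ W.map f = 0 :=
  Quiver.Hom.op_inj (DoldKan.degeneracy_comp_PInfty (opSimplicial W) m f hf)

lemma objD_comp_normProj (n : ℕ) :
    objD W n ≫ normProj W (n + 1) = normProj W n ≫ objD W n := by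
  have h := (DoldKan.PInfty (X := opSimplicial W)).comm (n + 1) n
  rw [AlternatingFaceMapComplex.obj_d_eq] at h
  rw [d_eq_unop_d]
  exact Quiver.Hom.op_inj h

lemma comp_normProj {T : C} {n : ℕ} (g : T ⟶ W.obj ⦋n⦌)
    (hg : ∀ (l : ℕ) (f : ⦋n⦌ ⟶ ⦋l⦌), ¬ Mono f → g ≫ W.map f = 0) : g ≫ normProj W n = g := by
  have hvanish : DoldKan.DegeneraciesVanish (X := opSimplicial W) g.op := by
    cases n with
    | zero => trivial
    | succ n => exact fun i => Quiver.Hom.unop_inj (hg n (SimplexCategory.σ i) fun h =>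
        absurd (SimplexCategory.len_le_of_mono (SimplexCategory.σ i)) (by simp))
  have hQ := (DoldKan.degeneraciesVanish_iff_QInfty_f_comp _).mp hvanish
  have h := (Preadditive.add_comp _ _ _ _ _ _).symm.trans
    (DoldKan.PInfty_f_add_QInfty_f (X := opSimplicial W) n =≫ g.op)
  rw [hQ, add_zero] at h
  exact Quiver.Hom.op_inj (h.trans (Category.id_comp _))

end Preadditive

variable {k : Type u} [Ring k] (W : CosimplicialObject (ModuleCat.{v} k))

/-- The normalized cochains of a cosimplicial module: those killed by all degeneracies. -/
def normalized (m : ℕ) : Submodule k (W.obj ⦋m⦌) :=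
  ⨅ (n : ℕ) (f : ⦋m⦌ ⟶ ⦋n⦌) (_ : ¬ Mono f), LinearMap.ker (W.map f).hom

variable {W}

lemma mem_normalized {m : ℕ} {x : W.obj ⦋m⦌} :
    x ∈ normalized W m ↔ ∀ (n : ℕ) (f : ⦋m⦌ ⟶ ⦋n⦌), ¬ Mono f → W.map f x = 0 := by
  simp only [normalized, Submodule.mem_iInf, LinearMap.mem_ker]

lemma normProj_of_mem_normalized {m : ℕ} {x : W.obj ⦋m⦌} (hx : x ∈ normalized W m) :
    normProj W m x = x :=
  ConcreteCategory.congr_hom (comp_normProj W (ModuleCat.ofHom (normalized W m).subtype)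
    fun n f hf => ModuleCat.hom_ext (LinearMap.ext fun y => mem_normalized.mp y.2 n f hf)) ⟨x, hx⟩

lemma exists_mem_normalized_objD_eq {m : ℕ} (x : W.obj ⦋m⦌)
    (hx : objD W m x ∈ normalized W (m + 1)) : ∃ y ∈ normalized W m, objD W m y = objD W m x := by
  refine ⟨normProj W m x, mem_normalized.mpr fun n f hf =>
    ConcreteCategory.congr_hom (normProj_comp_map W f hf) x, ?_⟩
  rw [← ConcreteCategory.comp_apply, ← objD_comp_normProj]
  exact normProj_of_mem_normalized hx

lemma exists_objD_eq {n : ℕ}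
    (h : Limits.IsZero (((alternatingCofaceMapComplex (ModuleCat.{v} k)).obj W).homology (n + 1)))
    {x : W.obj ⦋n + 1⦌} (hx : objD W (n + 1) x = 0) : ∃ y, objD W n y = x := by
  have hd (m : ℕ) : ((alternatingCofaceMapComplex (ModuleCat.{v} k)).obj W).d m (m + 1) =
    objD W m := CochainComplex.of_d (fun m => W.obj ⦋m⦌) (objD W) m
  rw [← HomologicalComplex.exactAt_iff_isZero_homology,
    HomologicalComplex.exactAt_iff' _ n (n + 1) (n + 2) (by simp) (by simp),
    ShortComplex.moduleCat_exact_iff] at h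
  obtain ⟨y, hy⟩ := h x ((ConcreteCategory.congr_hom (hd (n + 1)) x).trans hx)
  exact ⟨y, (ConcreteCategory.congr_hom (hd n) y).symm.trans hy⟩

lemma objD_apply (n : ℕ) (x : W.obj ⦋n⦌) :
    objD W n x = ∑ l : Fin (n + 2), (-1 : ℤ) ^ (l : ℕ) • W.map (SimplexCategory.δ l) x :=
  (LinearMap.congr_fun (ModuleCat.hom_sum _ _) x).trans (LinearMap.sum_apply _ _ _)

end Normalization

open Simplicial AlgebraicTopology AlternatingCofaceMapComplex CechTuple

section ConstantCochains

universe v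

variable {k : Type u}

section Ring

variable [Ring k] (W : CosimplicialObject (ModuleCat.{v} k)) (m : ℕ)

/-- The families `w n t ∈ Wⁿ` indexed by the `m`-tuples `t` of vertices of the simplices `[n]`,
alternating in `t` and natural in `[n]`. -/
def constCochains : AddSubgroup (∀ n : ℕ, (Fin m → Fin (n + 1)) → W.obj ⦋n⦌) where
  carrier := {w | (∀ n, w n ∈ alternating (Fin (n + 1)) (W.obj ⦋n⦌) m) ∧
    ∀ (p q : ℕ) (f : ⦋p⦌ ⟶ ⦋q⦌) (t : Fin m → Fin (p + 1)), W.map f (w p t) = w q (fn f ∘ t)}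
  zero_mem' := ⟨fun _ => zero_mem _, fun _ _ _ _ => map_zero _⟩
  add_mem' h h' := ⟨fun n => add_mem (h.1 n) (h'.1 n), fun p q f t => by
    simp only [Pi.add_apply, map_add, h.2, h'.2]⟩
  neg_mem' h := ⟨fun n => neg_mem (h.1 n), fun p q f t => by simp only [Pi.neg_apply, map_neg, h.2]⟩

variable {W m}

lemma cech_mem_constCochains {w : ∀ n : ℕ, (Fin m → Fin (n + 1)) → W.obj ⦋n⦌}
    (hw : w ∈ constCochains W m) : (fun n => cech (w n)) ∈ constCochains W (m + 1) :=
  ⟨fun n => cech_mem_alternating (hw.1 n), fun p q f t =>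
    (map_cech (W.map f).hom (w p) t).trans <| by
      simp only [cech_apply]
      exact Finset.sum_congr rfl fun l _ => congrArg _ (hw.2 p q f _)⟩

lemma eq_zero_of_mem_constCochains {w : ∀ n : ℕ, (Fin (m + 1) → Fin (n + 1)) → W.obj ⦋n⦌}
    (hw : w ∈ constCochains W (m + 1)) (h0 : w m id = 0) : w = 0 := by
  funext n t
  have hsort := hw.2 m n (SimplexCategory.mkHom ⟨_, Tuple.monotone_sort t⟩) id
  rw [h0, map_zero] at hsort
  exact (smul_eq_zero_iff_eq _).mp ((hw.1 n t (Tuple.sort t)).symm.trans hsort.symm)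

open Classical in
/-- The value of `x` on a monotone tuple, extended by zero. -/
def monoPart (x : W.obj ⦋m⦌) (n : ℕ) (t : Fin (m + 1) → Fin (n + 1)) : W.obj ⦋n⦌ :=
  if h : Monotone t then W.map (SimplexCategory.mkHom ⟨t, h⟩) x else 0

lemma map_monoPart {x : W.obj ⦋m⦌} (hx : x ∈ normalized W m) {p q : ℕ}
    (f : ⦋p⦌ ⟶ ⦋q⦌) (t : Fin (m + 1) → Fin (p + 1)) :
    W.map f (monoPart x p t) = monoPart x q (fn f ∘ t) := by
  have hf : Monotone (fn f) := f.toOrderHom.monotone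
  by_cases ht : Monotone t
  · rw [monoPart, dif_pos ht, monoPart, dif_pos (hf.comp ht), ← ConcreteCategory.comp_apply,
      ← W.map_comp]
    rfl
  · rw [monoPart, dif_neg ht, map_zero, monoPart]
    split_ifs with h
    · refine (mem_normalized.mp hx _ _ fun hmono => ht fun a b hab => ?_).symm
      by_contra! hlt
      have hab' : fn f (t a) = fn f (t b) := le_antisymm (h hab) (hf hlt.le)
      exact hlt.ne' (congrArg t (SimplexCategory.mono_iff_injective.mp hmono hab'))
    · rfl

/-- The alternating natural family attached to an element of `Wᵐ`: the signed sum of its values on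
the monotone rearrangements of a tuple. -/
def altFamily (x : W.obj ⦋m⦌) (n : ℕ) (t : Fin (m + 1) → Fin (n + 1)) : W.obj ⦋n⦌ :=
  ∑ π : Equiv.Perm (Fin (m + 1)), Equiv.Perm.sign π • monoPart x n (t ∘ π)

lemma altFamily_mem_constCochains {x : W.obj ⦋m⦌} (hx : x ∈ normalized W m) :
    altFamily x ∈ constCochains W (m + 1) := by
  refine ⟨fun n t ρ => ?_, fun p q f t => ?_⟩
  · rw [altFamily, altFamily, Finset.smul_sum]
    refine Fintype.sum_equiv (Equiv.mulLeft ρ) _ _ fun π => ?_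
    rw [Equiv.coe_mulLeft, smul_smul, map_mul, ← mul_assoc, Int.units_mul_self, one_mul]
    rfl
  · simp only [altFamily, Units.smul_def, map_sum, map_zsmul, map_monoPart hx]
    rfl

lemma altFamily_id (x : W.obj ⦋m⦌) : altFamily x m id = x := by
  rw [altFamily, Finset.sum_eq_single_of_mem 1 (Finset.mem_univ 1)]
  · rw [monoPart, dif_pos (by exact monotone_id), Equiv.Perm.sign_one, one_smul]
    exact ConcreteCategory.congr_hom (W.map_id ⦋m⦌) x
  · intro π _ hπ
    rw [monoPart, dif_neg fun hmono => hπ ?_, smul_zero]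
    have hid : ⇑π = id := StrictMono.eq_id (hmono.strictMono_of_injective π.injective)
    exact DFunLike.coe_injective hid

end Ring

lemma exists_cech_eq [Field k] [CharZero k] {W : CosimplicialObject (ModuleCat.{v} k)} {m : ℕ}
    (hW : Limits.IsZero
      (((alternatingCofaceMapComplex (ModuleCat.{v} k)).obj W).homology (m + 1)))
    {w : ∀ n : ℕ, (Fin (m + 2) → Fin (n + 1)) → W.obj ⦋n⦌} (hw : w ∈ constCochains W (m + 2))
    (hcech : ∀ n, cech (w n) = 0) : ∃ v ∈ constCochains W (m + 1), ∀ n, cech (v n) = w n := by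
  have hnorm : w (m + 1) id ∈ normalized W (m + 1) := mem_normalized.mpr fun n f hf => by
    have := IsAddTorsionFree.of_isTorsionFree k (W.obj ⦋n⦌)
    rw [hw.2]
    exact eq_zero_of_mem_alternating (hw.1 n) _ (mt SimplexCategory.mono_iff_injective.mpr hf)
  have hclosed : objD W (m + 1) (w (m + 1) id) = 0 := by
    rw [objD_apply]
    simp only [hw.2]
    exact congrFun (hcech (m + 2)) id
  obtain ⟨y, hy⟩ := exists_objD_eq hW hclosed
  obtain ⟨x, hx, hxy⟩ := exists_mem_normalized_objD_eq y (hy ▸ hnorm)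
  have halt := altFamily_mem_constCochains hx
  refine ⟨altFamily x, halt, fun n => sub_eq_zero.mp ?_⟩
  refine congrFun (eq_zero_of_mem_constCochains (sub_mem (cech_mem_constCochains halt) hw) ?_) n
  rw [Pi.sub_apply, Pi.sub_apply, sub_eq_zero, ← hy, ← hxy, objD_apply]
  conv_rhs => rw [← altFamily_id x]
  simp only [cech_apply, halt.2]
  rfl

end ConstantCochains

section DoubleComplex

variable {C : ℕ → ℕ → Type*} [∀ r m, AddCommGroup (C r m)] {d : ∀ {r m}, C r m →+ C (r + 1) m}
  {δ : ∀ {r m}, C r m →+ C r (m + 1)}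

lemma exists_cocycle_primitive (hdd : ∀ {r m} (x : C r m), d (d x) = 0)
    (hδδ : ∀ {r m} (x : C r m), δ (δ x) = 0) (hδd : ∀ {r m} (x : C r m), δ (d x) = d (δ x))
    (hd : ∀ {r m} (z : C (r + 1) (m + 1)), d z = 0 → ∃ y, d y = z)
    (hδ : ∀ {r m} (x : C r (m + 1)), δ x = 0 → ∃ y, δ y = x)
    (hconst : ∀ {m} (x : C 0 (m + 2)), d x = 0 → δ x = 0 → ∃ y, d y = 0 ∧ δ y = x)
    {r m : ℕ} (z : C (r + 1) (m + 1)) (hdz : d z = 0) (hδz : δ z = 0) :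
    ∃ y, d y = z ∧ δ y = 0 := by
  induction r generalizing m with
  | zero =>
    obtain ⟨y, rfl⟩ := hd z hdz
    obtain ⟨v, hdv, hδv⟩ := hconst (δ y) ((hδd y).symm.trans hδz) (hδδ y)
    exact ⟨y - v, by rw [map_sub, hdv, sub_zero], by rw [map_sub, hδv, sub_self]⟩
  | succ r ih =>
    obtain ⟨y, rfl⟩ := hd z hdz
    obtain ⟨x, hdx, hδx⟩ := ih (δ y) ((hδd y).symm.trans hδz) (hδδ y)
    obtain ⟨v, rfl⟩ := hδ x hδx
    exact ⟨y - d v, by rw [map_sub, hdd, sub_zero], by rw [map_sub, hδd, hdx, sub_self]⟩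

lemma exists_primitive_of_augmentation (hdd : ∀ {r m} (x : C r m), d (d x) = 0)
    (hδδ : ∀ {r m} (x : C r m), δ (δ x) = 0) (hδd : ∀ {r m} (x : C r m), δ (d x) = d (δ x))
    (hd : ∀ {r m} (z : C (r + 1) (m + 1)), d z = 0 → ∃ y, d y = z)
    (hδ : ∀ {r m} (x : C r (m + 1)), δ x = 0 → ∃ y, δ y = x)
    (hδ₀ : ∀ {r} (x : C r 0), δ x = 0 → x = 0)
    (hconst : ∀ {m} (x : C 0 (m + 2)), d x = 0 → δ x = 0 → ∃ y, d y = 0 ∧ δ y = x)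
    {r : ℕ} (a : C (r + 1) 0) (ha : d a = 0) : ∃ b, d b = a := by
  obtain ⟨y, hdy, hδy⟩ := exists_cocycle_primitive hdd hδδ hδd hd hδ hconst (δ a)
    (by rw [← hδd, ha, map_zero]) (hδδ a)
  obtain ⟨b, rfl⟩ := hδ y hδy
  refine ⟨b, sub_eq_zero.mp (hδ₀ _ ?_)⟩
  rw [map_sub, hδd, hdy, sub_self]

end DoubleComplex

open PolyDeRham CechTuple Simplicial

section FormCochains

variable {k : Type u} [Field k] (W : CosimplicialObject (ModuleCat.{max u w} k)) (r m : ℕ)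

/-- The families `b n t ∈ Ωₙʳ ⊗ Wⁿ` indexed by the `m`-tuples `t` of vertices of the simplices
`[n]`, alternating in `t` and natural in `[n]`. For `m = 0` these are the compatible families of
the totalization. -/
def formCochains :
    AddSubgroup (∀ n : ℕ, (Fin m → Fin (n + 1)) → Form k n r ⊗[k] W.obj ⦋n⦌) where
  carrier := {b | (∀ n, b n ∈ alternating (Fin (n + 1)) (Form k n r ⊗[k] W.obj ⦋n⦌) m) ∧
    ∀ (p q : ℕ) (f : ⦋p⦌ ⟶ ⦋q⦌) (t : Fin m → Fin (p + 1)),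
      (W.map f).hom.lTensor (Form k p r) (b p t) =
        (pull r (fn f)).rTensor (W.obj ⦋q⦌) (b q (fn f ∘ t))}
  zero_mem' := ⟨fun _ => zero_mem _, fun _ _ _ _ => by simp only [Pi.zero_apply, map_zero]⟩
  add_mem' h h' := ⟨fun n => add_mem (h.1 n) (h'.1 n), fun p q f t => by
    simp only [Pi.add_apply, map_add, h.2, h'.2]⟩
  neg_mem' h := ⟨fun n => neg_mem (h.1 n), fun p q f t => by simp only [Pi.neg_apply, map_neg, h.2]⟩

variable {W r m}

lemma rTensor_mem_formCochains {r' : ℕ}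
    {L : ∀ n : ℕ, (Fin m → Fin (n + 1)) → Form k n r →ₗ[k] Form k n r'}
    (hperm : ∀ n t (π : Equiv.Perm (Fin m)), L n (t ∘ π) = L n t)
    (hpull : ∀ p q (f : Fin (p + 1) → Fin (q + 1)) t,
      pull r' f ∘ₗ L q (f ∘ t) = L p t ∘ₗ pull r f)
    {b : ∀ n : ℕ, (Fin m → Fin (n + 1)) → Form k n r ⊗[k] W.obj ⦋n⦌} (hb : b ∈ formCochains W r m) :
    (fun n t => (L n t).rTensor (W.obj ⦋n⦌) (b n t)) ∈ formCochains W r' m := by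
  refine ⟨fun n t π => ?_, fun p q f t => ?_⟩
  · beta_reduce
    rw [hperm, hb.1 n, Units.smul_def, Units.smul_def, map_zsmul]
  · rw [lTensor_rTensor, hb.2, rTensor_comm_apply (hpull p q (fn f) t)]

lemma cech_mem_formCochains {b : ∀ n : ℕ, (Fin m → Fin (n + 1)) → Form k n r ⊗[k] W.obj ⦋n⦌}
    (hb : b ∈ formCochains W r m) : (fun n => cech (b n)) ∈ formCochains W r (m + 1) := by
  refine ⟨fun n => cech_mem_alternating (hb.1 n), fun p q f t => ?_⟩
  beta_reduce
  rw [map_cech, map_cech, cech_apply, cech_apply]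
  exact Finset.sum_congr rfl fun l _ => congrArg _ (hb.2 p q f _)

/-- The de Rham differential on `formCochains`. -/
def formD : formCochains W r m →+ formCochains W (r + 1) m where
  toFun b := ⟨fun n t => (deRham k n r).rTensor (W.obj ⦋n⦌) (b.1 n t),
    rTensor_mem_formCochains (L := fun n _ => deRham k n r) (fun _ _ _ => rfl)
      (fun _ _ f _ => pull_deRham r f) b.2⟩
  map_zero' := Subtype.ext <| funext fun _ => funext fun _ => map_zero _
  map_add' _ _ := Subtype.ext <| funext fun _ => funext fun _ => map_add _ _ _

/-- The Čech differential on `formCochains`. -/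
def formCech : formCochains W r m →+ formCochains W r (m + 1) where
  toFun b := ⟨fun n => cech (b.1 n), cech_mem_formCochains b.2⟩
  map_zero' := Subtype.ext <| funext fun _ => map_zero cech
  map_add' _ _ := Subtype.ext <| funext fun _ => map_add cech _ _

lemma formD_formD (b : formCochains W r m) : formD (formD b) = 0 :=
  Subtype.ext <| funext fun n => funext fun t => by
    change (deRham k n (r + 1)).rTensor _ ((deRham k n r).rTensor _ (b.1 n t)) = 0
    rw [← LinearMap.rTensor_comp_apply, deRham_comp_deRham, LinearMap.rTensor_zero,
      LinearMap.zero_apply]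

lemma formCech_formCech (b : formCochains W r m) : formCech (formCech b) = 0 :=
  Subtype.ext <| funext fun n => cech_cech (b.1 n)

lemma formCech_formD (b : formCochains W r m) : formCech (formD b) = formD (formCech b) :=
  Subtype.ext <| funext fun n => funext fun t =>
    (map_cech ((deRham k n r).rTensor (W.obj ⦋n⦌)) (b.1 n) t).symm

lemma exists_formD_eq [CharZero k] (z : formCochains W (r + 1) (m + 1)) (hz : formD z = 0) :
    ∃ y, formD y = z := by
  refine ⟨⟨_, rTensor_mem_formCochains (L := fun n t => meanCone t r)
    (fun n t π => meanCone_comp_perm t π r) (fun p q f t => pull_meanCone f t r) z.2⟩, ?_⟩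
  exact Subtype.ext <| funext fun n => funext fun t =>
    rTensor_deRham_meanCone t _ (congrFun (congrFun (congrArg Subtype.val hz) n) t)

/-- The contraction of the Čech differential given by the partition of unity `∑ⱼ tⱼ = 1`. -/
def cechContract (b : ∀ n : ℕ, (Fin (m + 1) → Fin (n + 1)) → Form k n r ⊗[k] W.obj ⦋n⦌)
    (n : ℕ) (t : Fin m → Fin (n + 1)) : Form k n r ⊗[k] W.obj ⦋n⦌ :=
  ∑ j, mulTensor k n (W.obj ⦋n⦌) r (coord k j) (b n (Fin.cons j t))

lemma cechContract_mem_formCochains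
    {b : ∀ n : ℕ, (Fin (m + 1) → Fin (n + 1)) → Form k n r ⊗[k] W.obj ⦋n⦌}
    (hb : b ∈ formCochains W r (m + 1)) : cechContract b ∈ formCochains W r m := by
  refine ⟨fun n t π => ?_, fun p q f t => ?_⟩
  · rw [cechContract, cechContract, Finset.smul_sum]
    refine Finset.sum_congr rfl fun j _ => ?_
    refine (congrArg _ (cons_mem_alternating (hb.1 n) j t π)).trans ?_
    rw [Units.smul_def, Units.smul_def, map_zsmul]
  · have hpull (j : Fin (q + 1)) (x : Form k q r ⊗[k] W.obj ⦋q⦌) :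
        (pull r (fn f)).rTensor _ (mulTensor k q _ r (coord k j) x) =
          ∑ i with fn f i = j, mulTensor k p _ r (coord k i) ((pull r (fn f)).rTensor _ x) := by
      rw [← LinearMap.sum_apply, ← map_sum, ← pullFun_coord]
      exact rTensor_comm_apply (pull_mulForm (fn f) (coord k j)) x
    rw [cechContract, cechContract, map_sum, map_sum, ← Finset.sum_fiberwise (g := fn f)]
    refine Finset.sum_congr rfl fun j _ => ?_
    rw [hpull]
    refine Finset.sum_congr rfl fun i hi => ?_
    rw [← (Finset.mem_filter.mp hi).2, ← Fin.comp_cons, ← hb.2]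
    exact lTensor_rTensor _ _ _

lemma cech_cechContract {b : ∀ n : ℕ, (Fin (m + 1) → Fin (n + 1)) → Form k n r ⊗[k] W.obj ⦋n⦌}
    (n : ℕ) (hb : cech (b n) = 0) : cech (cechContract b n) = b n := by
  have hcons (j : Fin (n + 1)) : cech (fun s => b n (Fin.cons j s)) = b n := funext fun t =>
    (sub_eq_zero.mp ((cech_cons (b n) j t).symm.trans (congrFun hb _))).symm
  have hsum : cechContract b n =
      ∑ j, mulTensor k n (W.obj ⦋n⦌) r (coord k j) ∘ fun s => b n (Fin.cons j s) :=
    funext fun t => (Finset.sum_apply t Finset.univ fun j =>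
      mulTensor k n (W.obj ⦋n⦌) r (coord k j) ∘ fun s => b n (Fin.cons j s)).symm
  rw [hsum, map_sum]
  funext t
  simp only [Finset.sum_apply, ← map_cech, hcons]
  rw [← LinearMap.sum_apply, ← map_sum, sum_coord, mulTensor_one, LinearMap.id_apply]

lemma exists_formCech_eq (b : formCochains W r (m + 1)) (hb : formCech b = 0) :
    ∃ y, formCech y = b :=
  ⟨⟨cechContract b.1, cechContract_mem_formCochains b.2⟩, Subtype.ext <| funext fun n =>
    cech_cechContract n (congrFun (congrArg Subtype.val hb) n)⟩

lemma formCech_injective_zero (b : formCochains W r 0) (hb : formCech b = 0) : b = 0 :=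
  Subtype.ext <| funext fun n => funext fun t =>
    (cech_zero_apply (b.1 n) (fun _ => 0) t).symm.trans
      (congrFun (congrFun (congrArg Subtype.val hb) n) _)

/-- Cochains as form-valued cochains with constant coefficients. -/
def constForm : constCochains W m →+ formCochains W 0 m where
  toFun w := ⟨fun n t => unit k n ⊗ₜ w.1 n t, fun n t π => by
      beta_reduce
      rw [w.2.1 n, Units.smul_def, Units.smul_def, tmul_smul], fun p q f t => by
      rw [LinearMap.lTensor_tmul, LinearMap.rTensor_tmul, pull_unit, ← w.2.2]⟩
  map_zero' := Subtype.ext <| funext fun _ => funext fun _ => tmul_zero _ _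
  map_add' _ _ := Subtype.ext <| funext fun _ => funext fun _ => tmul_add _ _ _

lemma formD_constForm (w : constCochains W m) : formD (constForm w) = 0 :=
  Subtype.ext <| funext fun n => funext fun t => by
    change (deRham k n 0).rTensor _ (unit k n ⊗ₜ w.1 n t) = 0
    rw [LinearMap.rTensor_tmul, deRham_unit, zero_tmul]

lemma cech_constForm (w : constCochains W m) (n : ℕ) (t : Fin (m + 1) → Fin (n + 1)) :
    cech ((constForm w).1 n) t = unit k n ⊗ₜ cech (w.1 n) t :=
  (map_cech (TensorProduct.mk k _ _ (unit k n)) (w.1 n) t).symm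

lemma exists_constForm_eq [CharZero k] (b : formCochains W 0 m) (hb : formD b = 0) :
    ∃ w, constForm w = b := by
  have hunit (n : ℕ) (t : Fin m → Fin (n + 1)) : unit k n ⊗ₜ evalTensor 0 (b.1 n t) = b.1 n t :=
    unit_tmul_evalTensor_of_closed 0 _ (congrFun (congrFun (congrArg Subtype.val hb) n) t)
  refine ⟨⟨fun n t => evalTensor 0 (b.1 n t), fun n t π => ?_, fun p q f t => ?_⟩,
    Subtype.ext <| funext fun n => funext <| hunit n⟩
  · beta_reduce
    rw [b.2.1 n, Units.smul_def, Units.smul_def, map_zsmul]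
  · have h := b.2.2 p q f t
    rw [← hunit p t, ← hunit q (fn f ∘ t), LinearMap.lTensor_tmul, LinearMap.rTensor_tmul,
      pull_unit] at h
    simpa only [evalTensor_unit_tmul] using congrArg (evalTensor 0) h

lemma exists_formD_eq_zero_formCech_eq [CharZero k]
    (hW : Limits.IsZero
      (((AlgebraicTopology.alternatingCofaceMapComplex (ModuleCat.{max u w} k)).obj W).homology
        (m + 1)))
    (b : formCochains W 0 (m + 2)) (hdb : formD b = 0) (hδb : formCech b = 0) :
    ∃ y, formD y = 0 ∧ formCech y = b := by
  obtain ⟨w, rfl⟩ := exists_constForm_eq b hdb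
  have hcech (n : ℕ) : cech (w.1 n) = 0 := funext fun t => by
    have h : unit k n ⊗ₜ cech (w.1 n) t = (0 : Form k n 0 ⊗[k] W.obj ⦋n⦌) :=
      (cech_constForm w n t).symm.trans (congrFun (congrFun (congrArg Subtype.val hδb) n) t)
    exact (evalTensor_unit_tmul 0 _).symm.trans ((congrArg (evalTensor 0) h).trans (map_zero _))
  obtain ⟨v, hv, hvw⟩ := exists_cech_eq hW w.2 hcech
  exact ⟨constForm ⟨v, hv⟩, formD_constForm _, Subtype.ext <| funext fun n => funext fun t =>
    (cech_constForm _ n t).trans (congrArg _ (congrFun (hvw n) t))⟩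

lemma exists_formD_eq_of_isZero_homology [CharZero k]
    (hW : ∀ j ≠ 0, Limits.IsZero
      (((AlgebraicTopology.alternatingCofaceMapComplex (ModuleCat.{max u w} k)).obj W).homology j))
    (a : formCochains W (r + 1) 0) (ha : formD a = 0) : ∃ b, formD b = a :=
  exists_primitive_of_augmentation (C := fun r m => formCochains W r m) formD_formD
    formCech_formCech formCech_formD exists_formD_eq exists_formCech_eq formCech_injective_zero
    (exists_formD_eq_zero_formCech_eq (hW _ (Nat.succ_ne_zero _))) a ha

end FormCochains

section Compatible

variable {k : Type u} [Field k] {V : CosimplicialObject (CochainComplex (ModuleCat.{max u w} k) ℤ)}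
  {r : ℕ} {i : ℤ}

variable (V i) in
/-- The cosimplicial vector space `V^{•,i}`. -/
abbrev component : CosimplicialObject (ModuleCat.{max u w} k) :=
  ((CosimplicialObject.whiskering _ _).obj
    (HomologicalComplex.eval (ModuleCat.{max u w} k) (ComplexShape.up ℤ) i)).obj V

/-- The compatibility condition of the totalization, for a family of `r`-forms with values in
`V^{•,i}`. -/
def Compatible (a : ∀ n : ℕ, Form k n r ⊗[k] comp V n i) : Prop :=
  ∀ (p q : ℕ) (f : SimplexCategory.mk p ⟶ SimplexCategory.mk q),
    (mapV V f i).lTensor (Form k p r) (a p) = (pull r (fn f)).rTensor (comp V q i) (a q)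

lemma Compatible.mem_formCochains {a : ∀ n : ℕ, Form k n r ⊗[k] comp V n i} (ha : Compatible a) :
    (fun n _ => a n) ∈ formCochains (component V i) r 0 :=
  ⟨fun n t π => by rw [Subsingleton.elim π 1, Equiv.Perm.sign_one]; exact (one_smul _ _).symm,
    fun p q f _ => ha p q f⟩

lemma Compatible.exists_rTensor_deRham_eq [CharZero k]
    (hV : ∀ j ≠ 0, Limits.IsZero
      (((AlgebraicTopology.alternatingCofaceMapComplex _).obj (component V i)).homology j))
    {a : ∀ n : ℕ, Form k n (r + 1) ⊗[k] comp V n i} (ha : Compatible a)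
    (hd : ∀ n, (deRham k n (r + 1)).rTensor (comp V n i) (a n) = 0) :
    ∃ b : ∀ n : ℕ, Form k n r ⊗[k] comp V n i, Compatible b ∧
      ∀ n, (deRham k n r).rTensor (comp V n i) (b n) = a n := by
  obtain ⟨b, hb⟩ := exists_formD_eq_of_isZero_homology hV ⟨_, ha.mem_formCochains⟩
    (Subtype.ext <| funext fun n => funext fun _ => hd n)
  refine ⟨fun n => b.1 n Fin.elim0, fun p q f => ?_,
    fun n => congrFun (congrFun (congrArg Subtype.val hb) n) Fin.elim0⟩
  exact (b.2.2 p q f Fin.elim0).trans (congrArg _ (congrArg (b.1 q) (Subsingleton.elim _ _)))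

lemma Compatible.exists_eq_unit_tmul [CharZero k]
    {a : ∀ n : ℕ, Form k n 0 ⊗[k] comp V n i} (ha : Compatible a)
    (hd : ∀ n, (deRham k n 0).rTensor (comp V n i) (a n) = 0) :
    ∃ x ∈ kerSub V i, ∀ n, a n = unit k n ⊗ₜ mapV V (vertex n) i x := by
  obtain ⟨v, hv⟩ := exists_constForm_eq ⟨_, ha.mem_formCochains⟩
    (Subtype.ext <| funext fun n => funext fun _ => hd n)
  have hnat {n : ℕ} (f : SimplexCategory.mk 0 ⟶ SimplexCategory.mk n) :
      mapV V f i (v.1 0 Fin.elim0) = v.1 n Fin.elim0 :=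
    (v.2.2 0 n f Fin.elim0).trans (congrArg (v.1 n) (Subsingleton.elim _ _))
  refine ⟨v.1 0 Fin.elim0, (hnat _).trans (hnat _).symm, fun n => ?_⟩
  rw [hnat]
  exact (congrFun (congrFun (congrArg Subtype.val hv) n) Fin.elim0).symm

end Compatible

section QuasiIso

variable {R : Type*} [Ring R]

lemma exists_epi_comp_eq {A B C : ModuleCat R} (f : A ⟶ C) (g : B ⟶ C)
    (h : ∀ a, ∃ b, f a = g b) :
    ∃ (P : ModuleCat R) (π : P ⟶ A) (_ : Epi π) (l : P ⟶ B), π ≫ f = l ≫ g := by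
  let P := LinearMap.eqLocus (f.hom ∘ₗ LinearMap.fst R A B) (g.hom ∘ₗ LinearMap.snd R A B)
  refine ⟨ModuleCat.of R P, ModuleCat.ofHom (LinearMap.fst R A B ∘ₗ P.subtype), ?_,
    ModuleCat.ofHom (LinearMap.snd R A B ∘ₗ P.subtype), ModuleCat.hom_ext ?_⟩
  · rw [ModuleCat.epi_iff_surjective]
    intro a
    obtain ⟨b, hb⟩ := h a
    exact ⟨⟨(a, b), hb⟩, rfl⟩
  · exact LinearMap.ext fun p => p.2

variable {K L : CochainComplex (ModuleCat R) ℤ} (φ : K ⟶ L) (m : ℤ)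

lemma mono_homologyMap_of_forall_exists
    (h : ∀ (x : K.X m) (y : L.X (m - 1)), φ.f m x = L.d (m - 1) m y → ∃ z, x = K.d (m - 1) m z) :
    Mono (HomologicalComplex.homologyMap φ m) := by
  rw [HomologicalComplex.mono_homologyMap_iff_up_to_refinements φ (m - 1) m (m + 1)
    (by simp) (by simp)]
  intro A x _ y hxy
  exact exists_epi_comp_eq x (K.d (m - 1) m) fun a =>
    h (x a) (y a) (ConcreteCategory.congr_hom hxy a)

lemma epi_homologyMap_of_forall_exists
    (h : ∀ y : L.X m, L.d m (m + 1) y = 0 →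
      ∃ x z, K.d m (m + 1) x = 0 ∧ y = φ.f m x + L.d (m - 1) m z) :
    Epi (HomologicalComplex.homologyMap φ m) := by
  rw [HomologicalComplex.epi_homologyMap_iff_up_to_refinements φ (m - 1) m (m + 1)
    (by simp) (by simp)]
  intro A y hy
  let Z := LinearMap.ker (K.d m (m + 1)).hom
  obtain ⟨P, π, hπ, l, hl⟩ := exists_epi_comp_eq (B := ModuleCat.of R (Z × L.X (m - 1))) y
    (ModuleCat.ofHom (((φ.f m).hom ∘ₗ Z.subtype).coprod (L.d (m - 1) m).hom)) fun a => by
      obtain ⟨x, z, hx, hxz⟩ := h (y a) (ConcreteCategory.congr_hom hy a)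
      exact ⟨(⟨x, hx⟩, z), hxz⟩
  refine ⟨P, π, hπ, l ≫ ModuleCat.ofHom (Z.subtype ∘ₗ LinearMap.fst R Z _), ?_,
    l ≫ ModuleCat.ofHom (LinearMap.snd R Z _), hl⟩
  exact ModuleCat.hom_ext <| LinearMap.ext fun p => (l p).1.2

lemma quasiIso_of_injective_of_forall_exists (hinj : ∀ m, Function.Injective (φ.f m))
    (h : ∀ m m' : ℤ, m + 1 = m' → ∀ (y : L.X m) (x' : K.X m'), L.d m m' y = φ.f m' x' →
      ∃ x z, y = φ.f m x + L.d (m - 1) m z) : QuasiIso φ := by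
  have hφ (i j : ℤ) (x : K.X i) : L.d i j (φ.f i x) = φ.f j (K.d i j x) :=
    ConcreteCategory.congr_hom (φ.comm i j) x
  have hL (i j l : ℤ) (x : L.X i) : L.d j l (L.d i j x) = 0 :=
    ConcreteCategory.congr_hom (L.d_comp_d i j l) x
  rw [quasiIso_iff]
  intro m
  rw [quasiIsoAt_iff_isIso_homologyMap]
  have hmono : Mono (HomologicalComplex.homologyMap φ m) :=
    mono_homologyMap_of_forall_exists φ m fun x y hxy => by
      obtain ⟨z, v, rfl⟩ := h (m - 1) m (sub_add_cancel m 1) y x hxy.symm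
      refine ⟨z, hinj m ?_⟩
      rw [hxy, map_add, hL, add_zero, hφ]
  have hepi : Epi (HomologicalComplex.homologyMap φ m) :=
    epi_homologyMap_of_forall_exists φ m fun y hy => by
      obtain ⟨x, z, rfl⟩ := h m (m + 1) rfl y 0 (hy.trans (map_zero _).symm)
      refine ⟨x, z, hinj (m + 1) ?_, rfl⟩
      rw [← hφ, map_zero, ← hy, map_add, hL, add_zero]
  exact isIso_of_mono_of_epi _

end QuasiIso

section Totalization

variable {k : Type u} [Field k] {V : CosimplicialObject (CochainComplex (ModuleCat.{max u w} k) ℤ)}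

section Single

variable {r : ℕ} {i : ℤ} (b : ∀ n : ℕ, Form k n r ⊗[k] comp V n i)

/-- The family concentrated in form degree `r` and internal degree `i`. -/
def singleFamily : Family V := fun n =>
  Pi.single (M := fun p => ∀ j : ℤ, Form k n p ⊗[k] comp V n j) r
    (Pi.single (M := fun j => Form k n r ⊗[k] comp V n j) i (b n))

lemma singleFamily_self (n : ℕ) : singleFamily b n r i = b n := by
  rw [singleFamily, Pi.single_eq_same, Pi.single_eq_same]

lemma singleFamily_of_ne_left (n : ℕ) {p : ℕ} (hp : p ≠ r) (j : ℤ) :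
    singleFamily b n p j = 0 := by
  rw [singleFamily, Pi.single_eq_of_ne hp]
  rfl

lemma singleFamily_of_ne_right (n p : ℕ) {j : ℤ} (hj : j ≠ i) : singleFamily b n p j = 0 := by
  rcases eq_or_ne p r with rfl | hp
  · rw [singleFamily, Pi.single_eq_same, Pi.single_eq_of_ne hj]
  · exact singleFamily_of_ne_left b n hp j

variable {b}

lemma Compatible.singleFamily_mem (hb : Compatible b) {m : ℤ} (hm : (r : ℤ) + i = m) :
    singleFamily b ∈ totSub V m := by
  refine ⟨fun n p j hpj => ?_, fun p q f s j => ?_⟩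
  · rcases eq_or_ne p r with rfl | hp
    · exact singleFamily_of_ne_right b n p (by rintro rfl; exact hpj hm)
    · exact singleFamily_of_ne_left b n hp j
  · rcases eq_or_ne s r with rfl | hs
    · rcases eq_or_ne j i with rfl | hj
      · rw [singleFamily_self, singleFamily_self, hb]
      · rw [singleFamily_of_ne_right b _ _ hj, singleFamily_of_ne_right b _ _ hj, map_zero,
          map_zero]
    · rw [singleFamily_of_ne_left b _ hs, singleFamily_of_ne_left b _ hs, map_zero, map_zero]

end Single

lemma rTensor_deRham_eq_zero_of_totD_eq_zero {y : Family V} {n r : ℕ} {i : ℤ}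
    (hD : totD V y n (r + 1) i = 0) (hy : y n (r + 1) (i - 1) = 0) :
    (deRham k n r).rTensor (comp V n i) (y n r i) = 0 := by
  rwa [totD_succ, hy, map_zero, smul_zero, add_zero] at hD

lemma exists_eq_unitFamily [CharZero k] {m : ℤ} {y : Family V} (hy : y ∈ totSub V m)
    (hy₀ : ∀ n r i, 0 < r → y n r i = 0) (hD : ∀ n r i, totD V y n (r + 1) i = 0) :
    ∃ x ∈ kerSub V m, y = unitFamily V m x := by
  obtain ⟨x, hx, hyx⟩ := Compatible.exists_eq_unit_tmul (a := fun n => y n 0 m)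
    (fun p q f => hy.2 p q f 0 m)
    fun n => rTensor_deRham_eq_zero_of_totD_eq_zero (hD n 0 m) (hy₀ n 1 _ one_pos)
  refine ⟨x, hx, funext fun n => funext fun p => funext fun i => ?_⟩
  rcases p with _ | p
  · rcases eq_or_ne i m with rfl | hi
    · exact (hyx n).trans (unitFamily_self V _ x n).symm
    · rw [unitFamily_of_ne V hi]
      exact hy.1 n 0 i (by simpa using hi)
  · exact hy₀ n _ i p.succ_pos

lemma exists_sub_totD_apply_eq_zero [CharZero k]
    (hV : ∀ (i : ℤ) (j : ℕ), j ≠ 0 → Limits.IsZero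
      (((AlgebraicTopology.alternatingCofaceMapComplex _).obj (component V i)).homology j))
    {m : ℤ} {R : ℕ} {y : Family V} (hy : y ∈ totSub V m)
    (hR : ∀ n r i, R + 1 < r → y n r i = 0) (hD : ∀ n r i, totD V y n (r + 1) i = 0) :
    ∃ z ∈ totSub V (m - 1), ∀ n r i, R < r → (y - totD V z) n r i = 0 := by
  obtain ⟨b, hb, hby⟩ := Compatible.exists_rTensor_deRham_eq (hV (m - (R + 1)))
    (a := fun n => y n (R + 1) (m - (R + 1))) (fun p q f => hy.2 p q f _ _)
    fun n => rTensor_deRham_eq_zero_of_totD_eq_zero (hD n _ _) (hR n _ _ (Nat.lt_succ_self _))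
  refine ⟨singleFamily b, hb.singleFamily_mem (by ring), fun n r i hr => ?_⟩
  obtain ⟨r, rfl⟩ : ∃ r', r = r' + 1 := Nat.exists_eq_add_one.mpr (pos_of_gt hr)
  change y n (r + 1) i - totD V (singleFamily b) n (r + 1) i = 0
  rw [totD_succ, singleFamily_of_ne_left b n hr.ne', map_zero, smul_zero, add_zero]
  rcases eq_or_ne r R with rfl | hne
  · rcases eq_or_ne i (m - (r + 1)) with rfl | hi
    · rw [singleFamily_self, hby, sub_self]
    · rw [singleFamily_of_ne_right b n r hi, map_zero, sub_zero]
      exact hy.1 n _ i (by push_cast; omega)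
  · rw [singleFamily_of_ne_left b n hne, map_zero, sub_zero]
    exact hR n _ i (by omega)

lemma exists_eq_unitFamily_add_totD [CharZero k]
    (hV : ∀ (i : ℤ) (j : ℕ), j ≠ 0 → Limits.IsZero
      (((AlgebraicTopology.alternatingCofaceMapComplex _).obj (component V i)).homology j))
    {m : ℤ} (R : ℕ) {y : Family V} (hy : y ∈ totSub V m)
    (hR : ∀ n r i, R < r → y n r i = 0) (hD : ∀ n r i, totD V y n (r + 1) i = 0) :
    ∃ x ∈ kerSub V m, ∃ z ∈ totSub V (m - 1), y = unitFamily V m x + totD V z := by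
  induction R generalizing y with
  | zero =>
    obtain ⟨x, hx, rfl⟩ := exists_eq_unitFamily hy hR hD
    exact ⟨x, hx, 0, zero_mem _, by rw [map_zero, add_zero]⟩
  | succ R ih =>
    obtain ⟨z, hz, hyz⟩ := exists_sub_totD_apply_eq_zero hV hy hR hD
    obtain ⟨x, hx, z', hz', hxz⟩ := ih (sub_mem hy (totD_mem V (sub_add_cancel m 1) _ hz)) hyz
      fun n r i => by rw [map_sub, totD_totD, sub_zero]; exact hD n r i
    exact ⟨x, hx, z' + z, add_mem hz' hz, by rw [map_add, ← add_assoc, ← hxz, sub_add_cancel]⟩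

variable (V) in
lemma unitFamily_injective (m : ℤ) : Function.Injective (unitFamily V m) := by
  intro x y hxy
  have h : unitFamily V m x 0 0 m = unitFamily V m y 0 0 m := by rw [hxy]
  have hid (z : comp V 0 m) : mapV V (vertex 0) m z = z := by
    rw [Subsingleton.elim (vertex 0) (𝟙 _), mapV, V.map_id]
    rfl
  rw [unitFamily_self, unitFamily_self] at h
  simpa only [evalTensor_unit_tmul, hid] using congrArg (evalTensor 0) h

lemma Tot_d_coe {m m' : ℤ} (h : m + 1 = m') (y : (Tot V).X m) :
    ((Tot V).d m m' y).1 = totD V y.1 := by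
  have hd : (Tot V).d m m' = ModuleCat.ofHom ((totD V).restrict (totD_mem V h)) := dif_pos h
  rw [hd]
  rfl

lemma apply_eq_zero_of_lt {M m : ℤ} (hM : ∀ n i, i < M → Limits.IsZero ((V.obj (.mk n)).X i))
    {y : Family V} (hy : y ∈ totSub V m) (n r : ℕ) (i : ℤ) (hr : (m - M).toNat < r) :
    y n r i = 0 := by
  by_cases hri : (r : ℤ) + i = m
  · have := ModuleCat.subsingleton_of_isZero (hM n i (by omega))
    exact Subsingleton.elim _ _
  · exact hy.1 n r i hri

end Totalization

end CosimplicialTot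

end

theorem ker_to_Tot_quasiIsomorphism {k : Type u} [Field k] [CharZero k]
    (V : CosimplicialObject (CochainComplex (ModuleCat.{max u w} k) ℤ))
    (hbdd : ∃ M : ℤ, ∀ (n : ℕ) (i : ℤ), i < M →
      Limits.IsZero ((V.obj (SimplexCategory.mk n)).X i))
    (hacyc : ∀ (i : ℤ) (j : ℕ), j ≠ 0 →
      Limits.IsZero (((AlgebraicTopology.alternatingCofaceMapComplex (ModuleCat.{max u w} k)).obj
        (((CosimplicialObject.whiskering _ _).obj
          (HomologicalComplex.eval (ModuleCat.{max u w} k) (ComplexShape.up ℤ) i)).obj V)).homology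
            j)) :
    QuasiIso (CosimplicialTot.kerToTot V) := by
  obtain ⟨M, hM⟩ := hbdd
  refine CosimplicialTot.quasiIso_of_injective_of_forall_exists _ (fun m x y hxy => ?_)
    fun m m' hm y x' hyx => ?_
  · exact Subtype.ext (CosimplicialTot.unitFamily_injective V m (congrArg Subtype.val hxy))
  · have hD : CosimplicialTot.totD V y.1 = CosimplicialTot.unitFamily V m' x'.1 :=
      (CosimplicialTot.Tot_d_coe hm y).symm.trans (congrArg Subtype.val hyx)
    obtain ⟨x, hx, z, hz, hyz⟩ := CosimplicialTot.exists_eq_unitFamily_add_totD hacyc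
      (m - M).toNat y.2 (CosimplicialTot.apply_eq_zero_of_lt hM y.2)
      fun n r i => by rw [hD, CosimplicialTot.unitFamily_succ]
    exact ⟨⟨x, hx⟩, ⟨z, hz⟩, Subtype.ext <| hyz.trans <| congrArg _
      (CosimplicialTot.Tot_d_coe (sub_add_cancel m 1) ⟨z, hz⟩).symm⟩
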